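/- arXiv:0904.0535 — 2 statements merged into one kernel-verified Lean document; each statement's English description precedes it below -/
import Mathlib

section
/- Let g and ḡ be geodesically equivalent pseudo-Riemannian metrics on a smooth manifold M, let L = L(g,ḡ) be the associated (1,1)-tensor, and let χ = χ1·χ2 be an admissible factorisation of the characteristic polynomial of L. Then the distributions D1 = ker χ1(L) and D2 = ker χ2(L) are integrable. -/
open Matrix Polynomial Filter

noncomputable section

variable {ι : Type} [Fintype ι] [DecidableEq ι]

/-- Partial derivative of a real-valued function on `ι → ℝ` in the direction of the
`j`-th coordinate vector. -/
def pd (j : ι) (F : (ι → ℝ) → ℝ) (x : ι → ℝ) : ℝ :=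
  fderiv ℝ F x (Pi.single j 1)

/-- Christoffel symbols `Γ^i_{jk}` of a metric given in local coordinates as a
matrix-valued function. -/
def christoffel (g : (ι → ℝ) → Matrix ι ι ℝ) (x : ι → ℝ) (i j k : ι) : ℝ :=
  (1 / 2) * ∑ m, (g x)⁻¹ i m *
    (pd j (fun y => g y m k) x + pd k (fun y => g y m j) x - pd m (fun y => g y j k) x)

/-- A curve is a geodesic of `g` up to reparametrisation (an unparametrized geodesic):
`γ̈ + Γ(γ̇,γ̇) = α(t)·γ̇` for some function `α`. -/
def IsPregeodesic (g : (ι → ℝ) → Matrix ι ι ℝ) (γ : ℝ → ι → ℝ) : Prop :=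
  ∃ α : ℝ → ℝ, ∀ t : ℝ, ∀ i : ι,
    deriv (fun s => deriv (fun τ => γ τ i) s) t
      + ∑ j, ∑ k, christoffel g (γ t) i j k *
          deriv (fun τ => γ τ j) t * deriv (fun τ => γ τ k) t
      = α t * deriv (fun τ => γ τ i) t

/-- `g` is a pseudo-Riemannian metric (in local coordinates) on the set `U`. -/
structure IsMetricOn (g : (ι → ℝ) → Matrix ι ι ℝ) (U : Set (ι → ℝ)) : Prop where
  smooth : ∀ i j, ContDiffOn ℝ (⊤ : ℕ∞) (fun x => g x i j) U
  symm : ∀ x ∈ U, (g x)ᵀ = g x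
  nondeg : ∀ x ∈ U, IsUnit (g x).det

/-- Two metrics are geodesically equivalent on `U`: they have the same geodesics
considered as unparametrized curves. -/
def GeodEquiv (g gb : (ι → ℝ) → Matrix ι ι ℝ) (U : Set (ι → ℝ)) : Prop :=
  ∀ γ : ℝ → ι → ℝ, ContDiff ℝ (⊤ : ℕ∞) γ → (∀ t, γ t ∈ U) →
    (IsPregeodesic g γ ↔ IsPregeodesic gb γ)

/-- The (1,1)-tensor `L(g,ḡ)^i_j = (det ḡ / det g)^{1/(n+1)} ḡ^{ik} g_{kj}`. -/
def Lten (g gb : (ι → ℝ) → Matrix ι ι ℝ) (x : ι → ℝ) : Matrix ι ι ℝ :=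
  (((gb x).det / (g x).det) ^ ((1 : ℝ) / (Fintype.card ι + 1))) • ((gb x)⁻¹ * g x)

/-- An admissible factorisation `χ = χ₁·χ₂` of the characteristic polynomial of `L`:
both factors are monic of degree ≥ 1, have smooth coefficients, and have no common
complex root at any point of `U`. -/
structure AdmissibleFact (L : (ι → ℝ) → Matrix ι ι ℝ) (U : Set (ι → ℝ))
    (chi1 chi2 : (ι → ℝ) → Polynomial ℝ) : Prop where
  factor : ∀ x ∈ U, (L x).charpoly = chi1 x * chi2 x
  monic1 : ∀ x ∈ U, (chi1 x).Monic
  monic2 : ∀ x ∈ U, (chi2 x).Monic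
  deg1 : ∀ x ∈ U, 1 ≤ (chi1 x).natDegree
  deg2 : ∀ x ∈ U, 1 ≤ (chi2 x).natDegree
  smooth1 : ∀ k, ContDiffOn ℝ (⊤ : ℕ∞) (fun x => (chi1 x).coeff k) U
  smooth2 : ∀ k, ContDiffOn ℝ (⊤ : ℕ∞) (fun x => (chi2 x).coeff k) U
  coprime : ∀ x ∈ U, ¬ ∃ z : ℂ, aeval z (chi1 x) = 0 ∧ aeval z (chi2 x) = 0

/-- The distribution `D = ker χ(L)`. -/
def Dker (L : (ι → ℝ) → Matrix ι ι ℝ) (chi : (ι → ℝ) → Polynomial ℝ) (x : ι → ℝ) :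
    Submodule ℝ (ι → ℝ) :=
  LinearMap.ker (Matrix.mulVecLin (aeval (L x) (chi x)))

/-- A distribution on `U` is integrable (involutive, which is equivalent by the
Frobenius theorem): the Lie bracket of any two smooth vector fields tangent to the
distribution is again tangent to it. -/
def IsIntegrableDist (U : Set (ι → ℝ)) (D : (ι → ℝ) → Submodule ℝ (ι → ℝ)) : Prop :=
  ∀ u v : (ι → ℝ) → ι → ℝ, ContDiffOn ℝ (⊤ : ℕ∞) u U → ContDiffOn ℝ (⊤ : ℕ∞) v U →
    (∀ x ∈ U, u x ∈ D x) → (∀ x ∈ U, v x ∈ D x) →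
    ∀ x ∈ U, (fderiv ℝ v x (u x) - fderiv ℝ u x (v x)) ∈ D x

section Smoothness

theorem contDiffAt_det {E : Type*} [NormedAddCommGroup E] [NormedSpace ℝ E] {k : WithTop ℕ∞}
    {M : E → Matrix ι ι ℝ} {x : E} (hM : ∀ i j, ContDiffAt ℝ k (fun y => M y i j) x) :
    ContDiffAt ℝ k (fun y => (M y).det) x := by
  simp only [Matrix.det_apply']
  exact ContDiffAt.sum fun σ _ => contDiffAt_const.mul (contDiffAt_prod fun i _ => hM _ _)

theorem contDiffAt_inv_entry {E : Type*} [NormedAddCommGroup E] [NormedSpace ℝ E]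
    {k : WithTop ℕ∞} {M : E → Matrix ι ι ℝ} {x : E}
    (hM : ∀ i j, ContDiffAt ℝ k (fun y => M y i j) x) (hdet : IsUnit (M x).det) (i j : ι) :
    ContDiffAt ℝ k (fun y => (M y)⁻¹ i j) x := by
  simp only [Matrix.inv_def, Matrix.smul_apply, Matrix.adjugate_apply, smul_eq_mul,
    Ring.inverse_eq_inv']
  refine ((contDiffAt_det hM).inv hdet.ne_zero).mul (contDiffAt_det fun a b => ?_)
  by_cases h : a = j
  · subst h
    simpa using contDiffAt_const
  · simpa [Matrix.updateRow_apply, h] using hM a b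

theorem contDiffAt_pd {F : (ι → ℝ) → ℝ} {x : ι → ℝ} (hF : ContDiffAt ℝ (⊤ : ℕ∞) F x) (j : ι) :
    ContDiffAt ℝ (⊤ : ℕ∞) (pd j F) x :=
  (hF.fderiv_right (m := (⊤ : ℕ∞)) le_rfl).clm_apply contDiffAt_const

variable {g : (ι → ℝ) → Matrix ι ι ℝ} {U : Set (ι → ℝ)} {x : ι → ℝ}

theorem IsMetricOn.contDiffAt (hg : IsMetricOn g U) (hU : IsOpen U) (hx : x ∈ U) (i j : ι) :
    ContDiffAt ℝ (⊤ : ℕ∞) (fun y => g y i j) x :=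
  (hg.smooth i j).contDiffAt (hU.mem_nhds hx)

theorem IsMetricOn.contDiffAt_christoffel (hg : IsMetricOn g U) (hU : IsOpen U) (hx : x ∈ U)
    (i j k : ι) : ContDiffAt ℝ (⊤ : ℕ∞) (fun y => christoffel g y i j k) x := by
  have h := hg.contDiffAt hU hx
  exact contDiffAt_const.mul <| ContDiffAt.sum fun m _ =>
    (contDiffAt_inv_entry h (hg.nondeg x hx) i m).mul <|
      ((contDiffAt_pd (h m k) j).add (contDiffAt_pd (h m j) k)).sub (contDiffAt_pd (h j k) m)

end Smoothness

section Geodesics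

/-- An integral curve of a smooth vector field is smooth. -/
theorem contDiffOn_of_hasDerivAt {E : Type*} [NormedAddCommGroup E] [NormedSpace ℝ E]
    {F : E → E} {α : ℝ → E} {s : Set ℝ} (hs : IsOpen s)
    (hF : ∀ t ∈ s, ContDiffAt ℝ (⊤ : ℕ∞) F (α t))
    (hα : ∀ t ∈ s, HasDerivAt α (F (α t)) t) : ContDiffOn ℝ (⊤ : ℕ∞) α s := by
  refine contDiffOn_infty.2 fun k => ?_
  induction k with
  | zero => exact contDiffOn_zero.2 fun t ht => (hα t ht).continuousAt.continuousWithinAt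
  | succ k ih =>
    push_cast
    refine (contDiffOn_succ_iff_deriv_of_isOpen hs).2
      ⟨fun t ht => (hα t ht).differentiableAt.differentiableWithinAt, by simp, ?_⟩
    refine ContDiffOn.congr (f := fun t => F (α t)) (fun t ht => ?_) fun t ht => (hα t ht).deriv
    exact ((hF t ht).of_le (by exact_mod_cast le_top)).comp_contDiffWithinAt t (ih t ht)

/-- The geodesic spray of `g` on `T(ℝ^ι)`. -/
def spray (g : (ι → ℝ) → Matrix ι ι ℝ) (p : (ι → ℝ) × (ι → ℝ)) : (ι → ℝ) × (ι → ℝ) :=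
  (p.2, fun i => -∑ j, ∑ k, christoffel g p.1 i j k * p.2 j * p.2 k)

variable {g : (ι → ℝ) → Matrix ι ι ℝ} {U : Set (ι → ℝ)} {x : ι → ℝ}

theorem IsMetricOn.contDiffAt_spray (hg : IsMetricOn g U) (hU : IsOpen U)
    {p : (ι → ℝ) × (ι → ℝ)} (hp : p.1 ∈ U) : ContDiffAt ℝ (⊤ : ℕ∞) (spray g) p := by
  refine contDiffAt_snd.prodMk (contDiffAt_pi.2 fun i => (ContDiffAt.sum fun j _ =>
    ContDiffAt.sum fun k _ => ?_).neg)
  have h := (hg.contDiffAt_christoffel hU hp i j k).comp p contDiffAt_fst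
  have hs := contDiffAt_pi.1 (contDiffAt_snd (𝕜 := ℝ) (n := ((⊤ : ℕ∞) : WithTop ℕ∞)) (p := p))
  exact (h.mul (hs j)).mul (hs k)

/-- Through every point and in every direction there is an unparametrized geodesic that stays
in `U` and is parametrized by the whole real line. -/
theorem IsMetricOn.exists_isPregeodesic (hg : IsMetricOn g U) (hU : IsOpen U) (hx : x ∈ U)
    (v : ι → ℝ) : ∃ (γ : ℝ → ι → ℝ) (c : ℝ), ContDiff ℝ (⊤ : ℕ∞) γ ∧ (∀ t, γ t ∈ U) ∧
      IsPregeodesic g γ ∧ c ≠ 0 ∧ γ 0 = x ∧ ∀ i, deriv (fun t => γ t i) 0 = c * v i := by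
  obtain ⟨α, hα0, ε, hε, hα⟩ :=
    ContDiffAt.exists_forall_mem_closedBall_exists_eq_forall_mem_Ioo_hasDerivAt₀
      ((hg.contDiffAt_spray hU (p := (x, v)) hx).of_le (by exact_mod_cast le_top)) 0
  have hmem : ∀ᶠ t in nhds (0 : ℝ), (α t).1 ∈ U := by
    have h0 : ContinuousAt (fun t => (α t).1) 0 :=
      (hα 0 (by simp [hε])).continuousAt.fst
    exact h0.eventually_mem (hU.mem_nhds (by simpa [hα0] using hx))
  obtain ⟨δ, hδ, hδU⟩ := Metric.eventually_nhds_iff.1 hmem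
  set r := min ε δ
  have hr0 : 0 < r := lt_min hε hδ
  have hUr : ∀ t ∈ Set.Ioo (-r) r, (α t).1 ∈ U := fun t ht =>
    hδU (by simpa [abs_lt] using
      ⟨(neg_le_neg (min_le_right ε δ)).trans_lt ht.1, ht.2.trans_le (min_le_right ε δ)⟩)
  have hαr : ∀ t ∈ Set.Ioo (-r) r, HasDerivAt α (spray g (α t)) t := fun t ht =>
    hα t ⟨by have := min_le_left ε δ; linarith [ht.1], by
      have := min_le_left ε δ; linarith [ht.2]⟩
  have hsm : ContDiffOn ℝ (⊤ : ℕ∞) α (Set.Ioo (-r) r) :=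
    contDiffOn_of_hasDerivAt isOpen_Ioo (fun t ht => hg.contDiffAt_spray hU (hUr t ht)) hαr
  set h : ℝ → ℝ := fun t => r / 2 * Real.arctan t with hh
  have hmaps : ∀ t, h t ∈ Set.Ioo (-r) r := fun t => by
    have h1 := Real.neg_pi_div_two_lt_arctan t
    have h2 := Real.arctan_lt_pi_div_two t
    have h3 := Real.pi_lt_four
    constructor <;> simp only [hh] <;> nlinarith
  set h' : ℝ → ℝ := fun t => r / 2 * (1 / (1 + t ^ 2)) with hh'
  have hder : ∀ t, HasDerivAt h (h' t) t := fun t => (Real.hasDerivAt_arctan t).const_mul _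
  have hne : ∀ t, h' t ≠ 0 := fun t => by positivity
  have hder' : ∀ t, DifferentiableAt ℝ h' t := fun t => by
    have : 1 + t ^ 2 ≠ 0 := by positivity
    simp only [hh']
    fun_prop (disch := assumption)
  have hcomp : ∀ t, HasDerivAt (fun s => α (h s)) (h' t • spray g (α (h t))) t := fun t =>
    (hαr (h t) (hmaps t)).scomp t (hder t)
  have hpos : ∀ t i, HasDerivAt (fun s => (α (h s)).1 i) (h' t * (α (h t)).2 i) t := fun t i =>
    (hasDerivAt_pi.1 (hcomp t).fst) i
  have hvel : ∀ t i, HasDerivAt (fun s => (α (h s)).2 i)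
      (h' t * (spray g (α (h t))).2 i) t := fun t i =>
    (hasDerivAt_pi.1 (hcomp t).snd) i
  have hd : ∀ i, deriv (fun s => (α (h s)).1 i) = fun t => h' t * (α (h t)).2 i := fun i =>
    funext fun t => (hpos t i).deriv
  refine ⟨fun t => (α (h t)).1, r / 2, ?_, fun t => hUr _ (hmaps t),
    ⟨fun t => deriv h' t / h' t, fun t i => ?_⟩, by positivity, by simp [hh, hα0], fun i => ?_⟩
  · refine contDiff_fst.comp (contDiffOn_univ.1 (hsm.comp ?_ fun t _ => hmaps t))
    exact (contDiff_const.mul Real.contDiff_arctan).contDiffOn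
  · simp only [hd]
    rw [((hder' t).hasDerivAt.fun_mul (hvel t i)).deriv]
    have hq : ∑ j, ∑ k, christoffel g (α (h t)).1 i j k * (h' t * (α (h t)).2 j) *
        (h' t * (α (h t)).2 k) = -(h' t ^ 2 * (spray g (α (h t))).2 i) := by
      simp only [spray, mul_neg, neg_neg, Finset.mul_sum]
      exact Finset.sum_congr rfl fun j _ => Finset.sum_congr rfl fun k _ => by ring
    rw [hq]
    have := hne t
    field_simp
    ring
  · rw [hd]
    simp [hh', hh, hα0]

end Geodesics

section ProjectiveEquivalence

/-- A symmetric vector-valued bilinear form `P` with `P(v, v)` proportional to `v` for all `v`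
is of the form `P(v, w) = φ(v) w + φ(w) v`. -/
theorem exists_eq_of_forall_proportional {P : ι → ι → ι → ℝ} (hsymm : ∀ i j k, P i j k = P i k j)
    (hP : ∀ v : ι → ℝ, ∃ c : ℝ, ∀ i, ∑ j, ∑ k, P i j k * v j * v k = c * v i) :
    ∃ φ : ι → ℝ, ∀ i j k, P i j k = (if i = k then φ j else 0) + (if i = j then φ k else 0) := by
  have hdiag : ∀ i j, i ≠ j → P i j j = 0 := fun i j hij => by
    obtain ⟨c, hc⟩ := hP (Pi.single j 1)
    simpa [Pi.single_apply, hij] using hc i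
  have hpair : ∀ (s : ℝ) (j k : ι), ∃ c : ℝ, ∀ i,
      P i j j + s * P i j k + s * P i k j + s * s * P i k k
        = c * ((if i = j then 1 else 0) + s * (if i = k then 1 else 0)) := fun s j k => by
    obtain ⟨c, hc⟩ := hP (Pi.single j 1 + s • Pi.single k 1)
    refine ⟨c, fun i => ?_⟩
    have h := hc i
    simp only [Pi.add_apply, Pi.smul_apply, Pi.single_apply, smul_eq_mul, mul_add,
      Finset.sum_add_distrib, add_mul, mul_ite, ite_mul, mul_one, mul_zero, zero_mul,
      Finset.sum_ite_eq', Finset.mem_univ, if_true] at h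
    simp only [mul_add, mul_ite, mul_one, mul_zero]
    linarith
  refine ⟨fun j => P j j j / 2, fun i j k => ?_⟩
  by_cases hjk : j = k
  · subst hjk
    by_cases hij : i = j
    · subst hij
      simp
    · simp [hij, hdiag i j hij]
  · obtain ⟨c, hc⟩ := hpair 1 j k
    obtain ⟨d, hd⟩ := hpair (-1) j k
    have hkj : k ≠ j := fun h => hjk h.symm
    by_cases hij : i = j
    · subst hij
      have h1 := hc i
      have h2 := hc k
      have h3 := hd i
      have h4 := hd k
      simp only [if_true, hjk, hkj, if_false, hdiag i k hjk, hdiag k i hkj, hsymm i k i,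
        hsymm k k i] at h1 h2 h3 h4 ⊢
      linarith
    · by_cases hik : i = k
      · subst hik
        have h1 := hc i
        have h2 := hc j
        have h3 := hd i
        have h4 := hd j
        simp only [if_true, hjk, hkj, if_false, hdiag i j hij, hdiag j i hjk, hsymm i i j,
          hsymm j i j] at h1 h2 h3 h4 ⊢
        linarith
      · have h1 := hc i
        simp only [hij, hik, if_false, hdiag i j hij, hdiag i k hik, hsymm i k j] at h1 ⊢
        linarith

variable {g gb : (ι → ℝ) → Matrix ι ι ℝ} {U : Set (ι → ℝ)} {x : ι → ℝ}

theorem IsMetricOn.pd_comm (hg : IsMetricOn g U) (hU : IsOpen U) (hx : x ∈ U) (m j k : ι) :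
    pd m (fun y => g y j k) x = pd m (fun y => g y k j) x := by
  have h : (fun y => g y j k) =ᶠ[nhds x] fun y => g y k j := by
    filter_upwards [hU.mem_nhds hx] with y hy
    exact congrFun (congrFun (hg.symm y hy) k) j
  rw [pd, pd, h.fderiv_eq]

theorem IsMetricOn.christoffel_comm (hg : IsMetricOn g U) (hU : IsOpen U) (hx : x ∈ U)
    (i j k : ι) : christoffel g x i j k = christoffel g x i k j := by
  simp only [christoffel, hg.pd_comm hU hx _ j k]
  congr 1
  exact Finset.sum_congr rfl fun m _ => by ring

theorem GeodEquiv.exists_christoffel_sub (hU : IsOpen U) (hg : IsMetricOn g U)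
    (hgb : IsMetricOn gb U) (hge : GeodEquiv g gb U) (hx : x ∈ U) :
    ∃ φ : ι → ℝ, ∀ i j k, christoffel gb x i j k - christoffel g x i j k
      = (if i = k then φ j else 0) + (if i = j then φ k else 0) := by
  refine exists_eq_of_forall_proportional
    (fun i j k => by rw [hg.christoffel_comm hU hx i j, hgb.christoffel_comm hU hx i j])
    fun v => ?_
  obtain ⟨γ, c, hγ, hγU, hpre, hc, rfl, hv⟩ := hg.exists_isPregeodesic hU hx v
  obtain ⟨β, hβ⟩ := (hge γ hγ hγU).1 hpre
  obtain ⟨α, hα⟩ := hpre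
  refine ⟨(β 0 - α 0) / c, fun i => ?_⟩
  have h1 := hα 0 i
  have h2 := hβ 0 i
  simp only [hv] at h1 h2
  have hscale : ∀ Γ : ι → ι → ℝ, ∑ j, ∑ k, Γ j k * (c * v j) * (c * v k)
      = c * c * ∑ j, ∑ k, Γ j k * v j * v k := fun Γ => by
    simp only [Finset.mul_sum]
    exact Finset.sum_congr rfl fun j _ => Finset.sum_congr rfl fun k _ => by ring
  rw [hscale] at h1 h2
  simp only [sub_mul, Finset.sum_sub_distrib]
  field_simp
  refine mul_left_cancel₀ hc ?_
  linear_combination h2 - h1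

end ProjectiveEquivalence

section CovariantDerivative

/-- The entrywise derivative of a matrix-valued function at `x` in the direction `u`. -/
def dirDeriv (M : (ι → ℝ) → Matrix ι ι ℝ) (x u : ι → ℝ) : Matrix ι ι ℝ :=
  Matrix.of fun i k => fderiv ℝ (fun y => M y i k) x u

/-- The connection matrix `(Γ_u)^i_k = Γ^i_{jk} u^j`. -/
def connMatrix (g : (ι → ℝ) → Matrix ι ι ℝ) (x u : ι → ℝ) : Matrix ι ι ℝ :=
  Matrix.of fun i k => ∑ j, christoffel g x i j k * u j

/-- The covariant derivative `∇_u w` at `x`. -/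
def covDeriv (g : (ι → ℝ) → Matrix ι ι ℝ) (w : (ι → ℝ) → ι → ℝ) (x u : ι → ℝ) : ι → ℝ :=
  fderiv ℝ w x u + connMatrix g x u *ᵥ w x

variable {g gb : (ι → ℝ) → Matrix ι ι ℝ} {U : Set (ι → ℝ)} {x : ι → ℝ}
  {w : (ι → ℝ) → ι → ℝ}

theorem fderiv_eq_sum_pd (F : (ι → ℝ) → ℝ) (x u : ι → ℝ) :
    fderiv ℝ F x u = ∑ j, pd j F x * u j := by
  conv_lhs => rw [← Finset.univ_sum_single u, map_sum]
  refine Finset.sum_congr rfl fun j _ => ?_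
  rw [pd, mul_comm, ← smul_eq_mul (u j), ← map_smul, ← Pi.single_smul, smul_eq_mul, mul_one]

theorem differentiableAt_mulVec {ι : Type} [Fintype ι] {M : (ι → ℝ) → Matrix ι ι ℝ}
    {x : ι → ℝ} {w : (ι → ℝ) → ι → ℝ}
    (hM : ∀ i j, DifferentiableAt ℝ (fun y => M y i j) x)
    (hw : DifferentiableAt ℝ w x) : DifferentiableAt ℝ (fun y => M y *ᵥ w y) x := by
  refine differentiableAt_pi.2 fun i => ?_
  simp only [Matrix.mulVec, dotProduct]
  exact DifferentiableAt.fun_sum fun j _ => (hM i j).fun_mul (differentiableAt_pi.1 hw j)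

theorem fderiv_mulVec {ι : Type} [Fintype ι] {M : (ι → ℝ) → Matrix ι ι ℝ}
    {x : ι → ℝ} {w : (ι → ℝ) → ι → ℝ}
    (hM : ∀ i j, DifferentiableAt ℝ (fun y => M y i j) x)
    (hw : DifferentiableAt ℝ w x) (u : ι → ℝ) :
    fderiv ℝ (fun y => M y *ᵥ w y) x u = dirDeriv M x u *ᵥ w x + M x *ᵥ fderiv ℝ w x u := by
  have hwj := differentiableAt_pi.1 hw
  funext i
  rw [fderiv_pi fun i => differentiableAt_pi.1 (differentiableAt_mulVec hM hw) i, fderiv_pi hwj]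
  simp only [ContinuousLinearMap.coe_pi', Pi.add_apply, Matrix.mulVec, dotProduct, dirDeriv,
    Matrix.of_apply]
  rw [fderiv_fun_sum fun j _ => (hM i j).fun_mul (hwj j), _root_.sum_apply,
    ← Finset.sum_add_distrib]
  refine Finset.sum_congr rfl fun j _ => ?_
  rw [fderiv_fun_mul (hM i j) (hwj j)]
  simp only [_root_.add_apply, _root_.smul_apply, smul_eq_mul]
  ring

theorem IsMetricOn.sum_mul_christoffel (hg : IsMetricOn g U) (hx : x ∈ U) (i j k : ι) :
    ∑ l, g x i l * christoffel g x l j k = (1 / 2) * (pd j (fun y => g y i k) x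
      + pd k (fun y => g y i j) x - pd i (fun y => g y j k) x) := by
  set d : ι → ℝ := fun m => pd j (fun y => g y m k) x + pd k (fun y => g y m j) x
    - pd m (fun y => g y j k) x
  have h : g x *ᵥ ((g x)⁻¹ *ᵥ d) = d := by
    rw [Matrix.mulVec_mulVec, Matrix.mul_nonsing_inv _ (hg.nondeg x hx), Matrix.one_mulVec]
  have hi := congrFun h i
  change _ = (1 / 2) * d i
  rw [← hi]
  conv_rhs => rw [Matrix.mulVec, dotProduct, Finset.mul_sum]
  refine Finset.sum_congr rfl fun l _ => ?_
  change g x i l * ((1 / 2) * ((g x)⁻¹ *ᵥ d) l) = _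
  ring

/-- The Levi-Civita connection is metric. -/
theorem IsMetricOn.dirDeriv_eq (hg : IsMetricOn g U) (hU : IsOpen U) (hx : x ∈ U) (u : ι → ℝ) :
    dirDeriv g x u = g x * connMatrix g x u + (connMatrix g x u)ᵀ * g x := by
  have hlow : ∀ i k, (g x * connMatrix g x u) i k = ∑ j, (1 / 2) * (pd j (fun y => g y i k) x
      + pd k (fun y => g y i j) x - pd i (fun y => g y j k) x) * u j := fun i k => by
    simp only [Matrix.mul_apply, connMatrix, Matrix.of_apply, Finset.mul_sum,
      ← hg.sum_mul_christoffel hx, Finset.sum_mul]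
    rw [Finset.sum_comm]
    exact Finset.sum_congr rfl fun j _ => Finset.sum_congr rfl fun l _ => by ring
  have htr : (connMatrix g x u)ᵀ * g x = (g x * connMatrix g x u)ᵀ := by
    rw [Matrix.transpose_mul, hg.symm x hx]
  ext i k
  rw [htr, Matrix.add_apply, Matrix.transpose_apply, hlow, hlow, ← Finset.sum_add_distrib,
    dirDeriv, Matrix.of_apply, fderiv_eq_sum_pd]
  refine Finset.sum_congr rfl fun j _ => ?_
  rw [hg.pd_comm hU hx j k i, hg.pd_comm hU hx k j i, hg.pd_comm hU hx i j k]
  ring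

theorem IsMetricOn.connMatrix_mulVec_comm (hg : IsMetricOn g U) (hU : IsOpen U) (hx : x ∈ U)
    (u v : ι → ℝ) : connMatrix g x u *ᵥ v = connMatrix g x v *ᵥ u := by
  funext i
  simp only [connMatrix, Matrix.mulVec, dotProduct, Matrix.of_apply, Finset.sum_mul]
  rw [Finset.sum_comm]
  refine Finset.sum_congr rfl fun j _ => Finset.sum_congr rfl fun k _ => ?_
  rw [hg.christoffel_comm hU hx]
  ring

theorem GeodEquiv.exists_connMatrix_eq (hU : IsOpen U) (hg : IsMetricOn g U)
    (hgb : IsMetricOn gb U) (hge : GeodEquiv g gb U) (hx : x ∈ U) :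
    ∃ φ : ι → ℝ, ∀ u, connMatrix gb x u
      = connMatrix g x u + (φ ⬝ᵥ u) • (1 : Matrix ι ι ℝ) + Matrix.vecMulVec u φ := by
  obtain ⟨φ, hφ⟩ := hge.exists_christoffel_sub hU hg hgb hx
  refine ⟨φ, fun u => ?_⟩
  ext i k
  have h : ∀ j, christoffel gb x i j k * u j = christoffel g x i j k * u j
      + ((if i = k then φ j else 0) + (if i = j then φ k else 0)) * u j := fun j => by
    rw [← hφ]
    ring
  simp only [connMatrix, Matrix.of_apply, h, Finset.sum_add_distrib, add_mul, Matrix.add_apply,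
    Matrix.smul_apply, Matrix.one_apply, Matrix.vecMulVec_apply, dotProduct, ite_mul, zero_mul,
    smul_eq_mul, mul_ite, mul_one, mul_zero, Finset.sum_ite_eq, Finset.mem_univ, if_true]
  by_cases hik : i = k <;> simp [hik] <;> ring

theorem IsMetricOn.differentiableAt_inv_mul (hg : IsMetricOn g U) (hgb : IsMetricOn gb U)
    (hU : IsOpen U) (hx : x ∈ U) (i j : ι) :
    DifferentiableAt ℝ (fun y => ((gb y)⁻¹ * g y) i j) x := by
  simp only [Matrix.mul_apply]
  exact DifferentiableAt.fun_sum fun k _ =>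
    ((contDiffAt_inv_entry (hgb.contDiffAt hU hx) (hgb.nondeg x hx) i k).differentiableAt
      (by simp)).fun_mul ((hg.contDiffAt hU hx k j).differentiableAt (by simp))

/-- Commutation of `∇` with `ḡ⁻¹g` for projectively equivalent Levi-Civita connections. -/
theorem covDeriv_inv_mul_mulVec (hU : IsOpen U) (hg : IsMetricOn g U) (hgb : IsMetricOn gb U)
    (hx : x ∈ U) {φ : ι → ℝ} {u : ι → ℝ}
    (hφ : connMatrix gb x u
      = connMatrix g x u + (φ ⬝ᵥ u) • (1 : Matrix ι ι ℝ) + Matrix.vecMulVec u φ)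
    (hw : DifferentiableAt ℝ w x) :
    covDeriv g (fun y => ((gb y)⁻¹ * g y) *ᵥ w y) x u
      = ((gb x)⁻¹ * g x) *ᵥ covDeriv g w x u
        - (2 * (φ ⬝ᵥ u)) • (((gb x)⁻¹ * g x) *ᵥ w x)
        - (φ ⬝ᵥ (((gb x)⁻¹ * g x) *ᵥ w x)) • u
        - (u ⬝ᵥ (g x *ᵥ w x)) • ((gb x)⁻¹ *ᵥ φ) := by
  have hdg : ∀ i j, DifferentiableAt ℝ (fun y => g y i j) x := fun i j =>
    (hg.contDiffAt hU hx i j).differentiableAt (by simp)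
  have hdgb : ∀ i j, DifferentiableAt ℝ (fun y => gb y i j) x := fun i j =>
    (hgb.contDiffAt hU hx i j).differentiableAt (by simp)
  have hAw := differentiableAt_mulVec (hg.differentiableAt_inv_mul hgb hU hx) hw
  have hcancel : ∀ y ∈ U, ∀ z, gb y *ᵥ (((gb y)⁻¹ * g y) *ᵥ z) = g y *ᵥ z := fun y hy z => by
    rw [Matrix.mulVec_mulVec, ← mul_assoc, Matrix.mul_nonsing_inv _ (hgb.nondeg y hy), one_mul]
  have hcancel' : ∀ z, gb x *ᵥ ((gb x)⁻¹ *ᵥ z) = z := fun z => by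
    rw [Matrix.mulVec_mulVec, Matrix.mul_nonsing_inv _ (hgb.nondeg x hx), Matrix.one_mulVec]
  have hev : (fun y => gb y *ᵥ (((gb y)⁻¹ * g y) *ᵥ w y)) =ᶠ[nhds x] fun y => g y *ᵥ w y := by
    filter_upwards [hU.mem_nhds hx] with y hy using hcancel y hy _
  have hprod := congrArg (fun f : (ι → ℝ) →L[ℝ] ι → ℝ => f u)
    (hev.fderiv_eq (𝕜 := ℝ))
  simp only [fderiv_mulVec hdgb hAw, fderiv_mulVec hdg hw, hg.dirDeriv_eq hU hx,
    hgb.dirDeriv_eq hU hx, hφ] at hprod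
  have hinj : Function.Injective (gb x).mulVec := fun a b hab => by
    have := congrArg ((gb x)⁻¹ *ᵥ ·) hab
    simpa [Matrix.mulVec_mulVec, Matrix.nonsing_inv_mul _ (hgb.nondeg x hx)] using this
  apply hinj
  simp only [covDeriv, Matrix.mulVec_add, Matrix.mulVec_sub, Matrix.mulVec_smul, hcancel x hx,
    hcancel']
  simp only [Matrix.transpose_add, Matrix.transpose_smul, Matrix.transpose_one,
    Matrix.transpose_vecMulVec, Matrix.add_mulVec, ← Matrix.mulVec_mulVec, Matrix.mulVec_add,
    Matrix.smul_mulVec, Matrix.one_mulVec, Matrix.vecMulVec_mulVec, Matrix.mulVec_smul,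
    op_smul_eq_smul] at hprod
  simp only [← Matrix.mulVec_mulVec] at hprod hcancel ⊢
  simp only [hcancel x hx] at hprod ⊢
  rw [eq_sub_of_add_eq' hprod]
  module

end CovariantDerivative

section Integrability

variable {g gb : (ι → ℝ) → Matrix ι ι ℝ} {U : Set (ι → ℝ)} {x : ι → ℝ}

theorem fderiv_sum_smul {ι : Type} [Fintype ι] {x : ι → ℝ} {κ : Type*} {s : Finset κ} {b : κ → (ι → ℝ) → ℝ}
    {w : κ → (ι → ℝ) → ι → ℝ} (hb : ∀ m ∈ s, DifferentiableAt ℝ (b m) x)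
    (hw : ∀ m ∈ s, DifferentiableAt ℝ (w m) x) (u : ι → ℝ) :
    fderiv ℝ (fun y => ∑ m ∈ s, b m y • w m y) x u
      = ∑ m ∈ s, (fderiv ℝ (b m) x u • w m x + b m x • fderiv ℝ (w m) x u) := by
  rw [fderiv_fun_sum fun m hm => (hb m hm).fun_smul (hw m hm), _root_.sum_apply]
  refine Finset.sum_congr rfl fun m hm => ?_
  rw [fderiv_fun_smul (hb m hm) (hw m hm)]
  simp [add_comm]

theorem dotProduct_mulVec_inv_mul_pow_comm {G H : Matrix ι ι ℝ} (hG : Gᵀ = G) (hH : Hᵀ = H)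
    (m : ℕ) (u v : ι → ℝ) :
    u ⬝ᵥ (G *ᵥ ((H⁻¹ * G) ^ m *ᵥ v)) = v ⬝ᵥ (G *ᵥ ((H⁻¹ * G) ^ m *ᵥ u)) := by
  have hs : (G * (H⁻¹ * G) ^ m)ᵀ = G * (H⁻¹ * G) ^ m := by
    rw [Matrix.transpose_mul, Matrix.transpose_pow, Matrix.transpose_mul,
      Matrix.transpose_nonsing_inv, hG, hH]
    induction m with
    | zero => simp
    | succ m ih =>
      rw [pow_succ, pow_succ, ← mul_assoc G, ← ih]
      simp only [mul_assoc]
  rw [Matrix.mulVec_mulVec, Matrix.mulVec_mulVec, Matrix.dotProduct_mulVec,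
    ← Matrix.mulVec_transpose, hs, dotProduct_comm]

theorem GeodEquiv.isIntegrableDist_Dker (hU : IsOpen U) (hg : IsMetricOn g U)
    (hgb : IsMetricOn gb U) (hge : GeodEquiv g gb U) {p q : (ι → ℝ) → Polynomial ℝ}
    (hfac : ∀ x ∈ U, (Lten g gb x).charpoly = p x * q x)
    (hp : ∀ k, ContDiffOn ℝ (⊤ : ℕ∞) (fun x => (p x).coeff k) U)
    (hpq : ∀ x ∈ U, IsCoprime (p x) (q x)) :
    IsIntegrableDist U (Dker (Lten g gb) p) := by
  intro u v hu hv huD hvD x hx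
  set A : (ι → ℝ) → Matrix ι ι ℝ := fun y => (gb y)⁻¹ * g y
  set f : (ι → ℝ) → ℝ :=
    fun y => ((gb y).det / (g y).det) ^ ((1 : ℝ) / (Fintype.card ι + 1))
  set N := Fintype.card ι + 1
  set b : ℕ → (ι → ℝ) → ℝ := fun m y => (p y).coeff m * f y ^ m
  have hL : ∀ y, Lten g gb y = f y • A y := fun y => rfl
  have hQ : ∀ y ∈ U, aeval (Lten g gb y) (p y) = ∑ m ∈ Finset.range N, b m y • A y ^ m := by
    intro y hy
    have hdeg : (p y).natDegree < N := by
      refine Nat.lt_succ_of_le ?_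
      rw [← Matrix.charpoly_natDegree_eq_dim (Lten g gb y)]
      exact Polynomial.natDegree_le_of_dvd ⟨_, hfac y hy⟩ (Matrix.charpoly_monic _).ne_zero
    rw [Polynomial.aeval_eq_sum_range' hdeg]
    refine Finset.sum_congr rfl fun m _ => ?_
    rw [hL, _root_.smul_pow, smul_smul]
  have hfd : DifferentiableAt ℝ f x := by
    have h1 : DifferentiableAt ℝ (fun y => (g y).det) x :=
      (contDiffAt_det (hg.contDiffAt hU hx)).differentiableAt (by simp)
    have h2 : DifferentiableAt ℝ (fun y => (gb y).det) x :=
      (contDiffAt_det (hgb.contDiffAt hU hx)).differentiableAt (by simp)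
    have hg0 := (hg.nondeg x hx).ne_zero
    have h3 : DifferentiableAt ℝ (fun y => (gb y).det / (g y).det) x := by
      simp only [div_eq_mul_inv]
      exact h2.fun_mul (h1.fun_inv hg0)
    exact h3.rpow_const (Or.inl (div_ne_zero (hgb.nondeg x hx).ne_zero hg0))
  have hbd : ∀ m, DifferentiableAt ℝ (b m) x := fun m =>
    (((hp m).contDiffAt (hU.mem_nhds hx)).differentiableAt (by simp)).fun_mul (hfd.fun_pow m)
  set Q := aeval (Lten g gb x) (p x) with hQx
  have hQA : ∀ z, Q *ᵥ (A x *ᵥ z) = A x *ᵥ (Q *ᵥ z) := fun z => by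
    have : Commute (A x) Q := by
      rw [hQx, hQ x hx]
      exact Commute.sum_right _ _ _ fun m _ => ((Commute.refl _).pow_right m).smul_right _
    rw [Matrix.mulVec_mulVec, Matrix.mulVec_mulVec, this.eq]
  have hQpow : ∀ m z, Q *ᵥ z = 0 → Q *ᵥ (A x ^ m *ᵥ z) = 0 := fun m z hz => by
    induction m with
    | zero => simpa using hz
    | succ m ih => rw [pow_succ', ← Matrix.mulVec_mulVec, hQA, ih, Matrix.mulVec_zero]
  have hdiff : ∀ w : (ι → ℝ) → ι → ℝ, DifferentiableAt ℝ w x →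
      ∀ m, DifferentiableAt ℝ (fun y => A y ^ m *ᵥ w y) x := fun w hw m => by
    induction m with
    | zero => simpa using hw
    | succ m ih =>
      simp only [pow_succ', ← Matrix.mulVec_mulVec]
      exact differentiableAt_mulVec (hg.differentiableAt_inv_mul hgb hU hx) ih
  obtain ⟨φ, hφ⟩ := hge.exists_connMatrix_eq hU hg hgb hx
  have hrec : ∀ (w : (ι → ℝ) → ι → ℝ) (z : ι → ℝ), DifferentiableAt ℝ w x →
      Q *ᵥ w x = 0 → Q *ᵥ z = 0 → ∀ m,
      Q *ᵥ covDeriv g (fun y => A y ^ (m + 1) *ᵥ w y) x z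
        = A x *ᵥ (Q *ᵥ covDeriv g (fun y => A y ^ m *ᵥ w y) x z)
          - (z ⬝ᵥ (g x *ᵥ (A x ^ m *ᵥ w x))) • (Q *ᵥ ((gb x)⁻¹ *ᵥ φ)) := by
    intro w z hw hwQ hz m
    simp only [pow_succ', ← Matrix.mulVec_mulVec (w _)]
    rw [covDeriv_inv_mul_mulVec hU hg hgb hx (hφ z) (hdiff w hw m)]
    simp only [Matrix.mulVec_sub, Matrix.mulVec_smul]
    rw [hz, hQA, hQA, hQpow m _ hwQ]
    simp
  have hzero : ∀ (w : (ι → ℝ) → ι → ℝ) (z : ι → ℝ), DifferentiableAt ℝ w x →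
      (∀ y ∈ U, w y ∈ Dker (Lten g gb) p y) →
      ∑ m ∈ Finset.range N, b m x • (Q *ᵥ covDeriv g (fun y => A y ^ m *ᵥ w y) x z) = 0 := by
    intro w z hw hwD
    have hsum : ∀ y ∈ U, ∑ m ∈ Finset.range N, b m y • (A y ^ m *ᵥ w y) = 0 := fun y hy => by
      have h : aeval (Lten g gb y) (p y) *ᵥ w y = 0 := hwD y hy
      simpa only [hQ y hy, Matrix.sum_mulVec, Matrix.smul_mulVec] using h
    have hwQ : Q *ᵥ w x = 0 := hwD x hx
    have hev : (fun y => ∑ m ∈ Finset.range N, b m y • (A y ^ m *ᵥ w y)) =ᶠ[nhds x]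
        fun _ => 0 := by
      filter_upwards [hU.mem_nhds hx] with y hy using hsum y hy
    have hd := fderiv_sum_smul (s := Finset.range N) (fun m _ => hbd m)
      (fun m _ => hdiff w hw m) z
    rw [hev.fderiv_eq, fderiv_fun_const] at hd
    have hd' := congrArg (Q *ᵥ ·) hd
    have hc := congrArg (fun a => Q *ᵥ (connMatrix g x z *ᵥ a)) (hsum x hx)
    simp only [Pi.zero_apply, _root_.zero_apply, Finset.sum_add_distrib, Matrix.mulVec_add,
      Matrix.mulVec_sum, Matrix.mulVec_smul, Matrix.mulVec_zero, hQpow _ _ hwQ, smul_zero,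
      Finset.sum_const_zero, zero_add] at hd' hc
    simp only [covDeriv, Matrix.mulVec_add, smul_add, Finset.sum_add_distrib, ← hd', hc, add_zero]
  have hud := (hu.contDiffAt (hU.mem_nhds hx)).differentiableAt (by simp)
  have hvd := (hv.contDiffAt (hU.mem_nhds hx)).differentiableAt (by simp)
  have huQ : Q *ᵥ u x = 0 := huD x hx
  have hvQ : Q *ᵥ v x = 0 := hvD x hx
  set B := fderiv ℝ v x (u x) - fderiv ℝ u x (v x) with hB
  have hdm : ∀ m, Q *ᵥ covDeriv g (fun y => A y ^ m *ᵥ v y) x (u x)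
      - Q *ᵥ covDeriv g (fun y => A y ^ m *ᵥ u y) x (v x) = A x ^ m *ᵥ (Q *ᵥ B) := by
    intro m
    induction m with
    | zero =>
      simp only [pow_zero, Matrix.one_mulVec, covDeriv]
      rw [hg.connMatrix_mulVec_comm hU hx (v x), ← Matrix.mulVec_sub, hB]
      congr 1
      abel
    | succ m ih =>
      rw [hrec v _ hvd hvQ huQ, hrec u _ hud huQ hvQ, pow_succ',
        ← Matrix.mulVec_mulVec (Q *ᵥ B), ← ih, Matrix.mulVec_sub,
        dotProduct_mulVec_inv_mul_pow_comm (hg.symm x hx) (hgb.symm x hx) m (u x)]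
      abel
  have hQQ : Q *ᵥ (Q *ᵥ B) = 0 := by
    conv_lhs =>
      arg 1
      rw [hQx, hQ x hx]
    simp only [Matrix.sum_mulVec, Matrix.smul_mulVec, ← hdm, smul_sub, Finset.sum_sub_distrib]
    rw [hzero v _ hvd hvD, hzero u _ hud huD, sub_zero]
  obtain ⟨r, s, hrs⟩ := hpq x hx
  have hCH : aeval (Lten g gb x) (q x) * Q = 0 := by
    rw [hQx, ← map_mul, mul_comm, ← hfac x hx, Matrix.aeval_self_charpoly]
  have hone := congrArg (aeval (Lten g gb x)) hrs
  rw [map_add, map_mul, map_mul, map_one] at hone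
  change Q *ᵥ B = 0
  calc Q *ᵥ B = (aeval (Lten g gb x) r * Q + aeval (Lten g gb x) s
        * aeval (Lten g gb x) (q x)) *ᵥ (Q *ᵥ B) := by rw [hone, Matrix.one_mulVec]
    _ = 0 := by
      rw [Matrix.add_mulVec, ← Matrix.mulVec_mulVec, hQQ, Matrix.mulVec_mulVec, mul_assoc, hCH]
      simp

end Integrability

theorem stmt0 {n : ℕ} (U : Set (Fin n → ℝ)) (hU : IsOpen U)
    (g gb : (Fin n → ℝ) → Matrix (Fin n) (Fin n) ℝ)
    (hg : IsMetricOn g U) (hgb : IsMetricOn gb U)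
    (hge : GeodEquiv g gb U)
    (chi1 chi2 : (Fin n → ℝ) → Polynomial ℝ)
    (hfac : AdmissibleFact (Lten g gb) U chi1 chi2) :
    IsIntegrableDist U (Dker (Lten g gb) chi1) ∧
      IsIntegrableDist U (Dker (Lten g gb) chi2) := by
  have hco : ∀ x ∈ U, IsCoprime (chi1 x) (chi2 x) := fun x hx =>
    (Polynomial.isCoprime_iff_aeval_ne_zero_of_isAlgClosed _ ℂ _ _).2 fun z =>
      not_and_or.1 fun h => hfac.coprime x hx ⟨z, h⟩
  exact ⟨hge.isIntegrableDist_Dker hU hg hgb hfac.factor hfac.smooth1 hco,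
    hge.isIntegrableDist_Dker hU hg hgb (fun x hx => (hfac.factor x hx).trans (mul_comm _ _))
      hfac.smooth2 fun x hx => (hco x hx).symm⟩
end
end

section
/- Let g and ḡ be geodesically equivalent pseudo-Riemannian metrics on M and L = L(g,ḡ). Suppose K ⊂ ℂ is compact and f : K → ℂ is a function such that K, f, and L satisfy the admissibility assumptions, and assume in addition that 0 ∉ f(Spectrum L(x)) for every x ∈ M. Then the metrics (g_f)_{ij} = g_{iα} f(L)^α_j and (ḡ_f)_{ij} = ḡ_{iα} f(L)^α_j are also geodesically equivalent. -/
open Matrix Polynomial Filter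

noncomputable section

variable {ι : Type} [Fintype ι] [DecidableEq ι]

/-- The assumptions (i)–(iv) of Section 1.3 on the compact set `K` and the function
`f : K → ℂ` (the condition on the spectrum of `L` is stated separately). -/
structure AdmissibleFun (K : Set ℂ) (f : ℂ → ℂ) : Prop where
  compact : IsCompact K
  conn : IsConnected Kᶜ
  cont : ContinuousOn f K
  holo : DifferentiableOn ℂ f (interior K)
  symmK : ∀ z ∈ K, (starRingEnd ℂ) z ∈ K
  symmf : ∀ z ∈ K, f ((starRingEnd ℂ) z) = (starRingEnd ℂ) (f z)

/-- Assumption (v): the (complex) spectrum of `L(x)` lies in the interior of `K` for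
every `x ∈ U`. -/
def SpectrumIn {ι : Type} [Fintype ι] [DecidableEq ι]
    (L : (ι → ℝ) → Matrix ι ι ℝ) (U : Set (ι → ℝ)) (K : Set ℂ) : Prop :=
  ∀ x ∈ U, spectrum ℂ ((L x).map (algebraMap ℝ ℂ)) ⊆ interior K

/-- `FL` represents the (1,1)-tensor `f(L)`: it is the limit of `pᵢ(L)` for a sequence
of real polynomials `pᵢ` converging to `f` uniformly on `K` (such a sequence exists by
Mergelyan's theorem, and the limit does not depend on its choice). -/
def RepFunOfL {ι : Type} [Fintype ι] [DecidableEq ι]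
    (L : (ι → ℝ) → Matrix ι ι ℝ) (U : Set (ι → ℝ)) (K : Set ℂ) (f : ℂ → ℂ)
    (FL : (ι → ℝ) → Matrix ι ι ℝ) : Prop :=
  ∃ p : ℕ → Polynomial ℝ,
    TendstoUniformlyOn (fun m z => aeval z (p m)) f atTop K ∧
    ∀ x ∈ U, ∀ i j, Tendsto (fun m => aeval (L x) (p m) i j) atTop (nhds (FL x i j))

section FunctionalCalculusBounds

open scoped Matrix.Norms.Operator

theorem norm_eval_divByMonic_X_sub_C_le {K : Set ℂ} {ρ M : ℝ} (hρ : 0 < ρ) {a : ℂ}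
    (ha : Metric.closedBall a ρ ⊆ K) (p : ℂ[X]) (hp : ∀ z ∈ K, ‖p.eval z‖ ≤ M) :
    ∀ z ∈ K, ‖(p /ₘ (X - C a)).eval z‖ ≤ 2 / ρ * M := by
  set q := p /ₘ (X - C a) with hq
  have hdecomp : ∀ z, p.eval z - p.eval a = (z - a) * q.eval z := by
    intro z
    have h := congrArg (eval z) (modByMonic_add_div p (X - C a))
    rw [modByMonic_X_sub_C_eq_C_eval] at h
    simp only [eval_add, eval_C, eval_mul, eval_sub, eval_X] at h
    rw [← h, hq]
    ring
  have hfar : ∀ z ∈ K, ρ ≤ ‖z - a‖ → ‖q.eval z‖ ≤ 2 / ρ * M := by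
    intro z hz hza
    have h1 : ‖z - a‖ * ‖q.eval z‖ ≤ 2 * M := by
      rw [← norm_mul, ← hdecomp]
      have := hp a (ha (Metric.mem_closedBall_self hρ.le))
      linarith [norm_sub_le (p.eval z) (p.eval a), hp z hz]
    rw [div_mul_eq_mul_div, le_div_iff₀ hρ]
    nlinarith [norm_nonneg (q.eval z)]
  intro z hz
  rcases le_or_gt ρ ‖z - a‖ with h | h
  · exact hfar z hz h
  · refine Complex.norm_le_of_forall_mem_frontier_norm_le (U := Metric.ball a ρ)
      Metric.isBounded_ball (f := fun w => q.eval w) ?_ ?_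
      (subset_closure (by simpa [dist_eq_norm] using h))
    · exact q.differentiable.diffContOnCl
    · intro w hw
      rw [frontier_ball a hρ.ne', mem_sphere_iff_norm] at hw
      exact hfar w (ha (by simp [dist_eq_norm, hw])) hw.ge

theorem exists_norm_aeval_sub_mul_prod_le (𝔸 : Type*) [NormedRing 𝔸] [NormedAlgebra ℂ 𝔸]
    (K : Set ℂ) {ρ R : ℝ} (hρ : 0 < ρ) (hR : 0 ≤ R) (k : ℕ) :
    ∃ B : ℝ, 0 ≤ B ∧ ∀ s : Multiset ℂ, s.card = k →
      (∀ a ∈ s, Metric.closedBall a ρ ⊆ K ∧ ‖a‖ ≤ R) →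
      ∀ (A : 𝔸), ‖A‖ ≤ R → ∀ (p : ℂ[X]) (M : ℝ), 0 ≤ M → (∀ z ∈ K, ‖p.eval z‖ ≤ M) →
        ∃ q : ℂ[X], ‖aeval A (p - q * (s.map fun a => X - C a).prod)‖ ≤ B * M := by
  induction k with
  | zero =>
    refine ⟨0, le_rfl, fun s hs _ A _ p M _ _ => ⟨p, ?_⟩⟩
    simp [Multiset.card_eq_zero.mp hs]
  | succ k ih =>
    obtain ⟨B, hB, ih⟩ := ih
    refine ⟨‖(1 : 𝔸)‖ + (R + R * ‖(1 : 𝔸)‖) * (B * (2 / ρ)), by positivity, ?_⟩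
    intro s hs hsK A hA p M hM hp
    obtain ⟨a, t, rfl, ht⟩ := Multiset.card_eq_succ_iff.mp hs
    have haK := hsK a (Multiset.mem_cons_self a t)
    obtain ⟨q, hq⟩ := ih t ht (fun b hb => hsK b (Multiset.mem_cons_of_mem hb)) A hA
      (p /ₘ (X - C a)) (2 / ρ * M) (by positivity)
      (norm_eval_divByMonic_X_sub_C_le hρ haK.1 p hp)
    refine ⟨q, ?_⟩
    have hpa : p - q * ((a ::ₘ t).map fun a => X - C a).prod
        = C (p.eval a) + (X - C a) * (p /ₘ (X - C a) - q * (t.map fun a => X - C a).prod) := by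
      have h := modByMonic_add_div p (X - C a)
      rw [modByMonic_X_sub_C_eq_C_eval] at h
      rw [Multiset.map_cons, Multiset.prod_cons]
      linear_combination -h
    rw [hpa, map_add, map_mul, aeval_C]
    have h1 : ‖algebraMap ℂ 𝔸 (p.eval a)‖ ≤ ‖(1 : 𝔸)‖ * M := by
      rw [norm_algebraMap, mul_comm]
      gcongr
      exact hp a (haK.1 (Metric.mem_closedBall_self hρ.le))
    have h2 : ‖aeval A (X - C a)‖ ≤ R + R * ‖(1 : 𝔸)‖ := by
      rw [map_sub, aeval_X, aeval_C]
      refine (norm_sub_le _ _).trans ?_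
      rw [norm_algebraMap]
      gcongr
      exact haK.2
    calc _ ≤ ‖(1 : 𝔸)‖ * M + (R + R * ‖(1 : 𝔸)‖) * (B * (2 / ρ * M)) := by
          refine (norm_add_le _ _).trans (add_le_add h1 ((norm_mul_le _ _).trans ?_))
          gcongr
      _ = _ := by ring

variable {n : Type*} [Fintype n] [DecidableEq n]

theorem exists_ball_norm_aeval_le {K : Set ℂ} (A₀ : Matrix n n ℂ)
    (hA₀ : spectrum ℂ A₀ ⊆ interior K) :
    ∃ r > 0, ∃ B : ℝ, 0 ≤ B ∧ ∀ A ∈ Metric.ball A₀ r, ∀ (p : ℂ[X]) (M : ℝ), 0 ≤ M →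
      (∀ z ∈ K, ‖p.eval z‖ ≤ M) → ‖aeval A p‖ ≤ B * M := by
  obtain ⟨δ, hδ, hδK⟩ := (spectrum.isCompact (𝕜 := ℂ) A₀).exists_thickening_subset_open
    isOpen_interior hA₀
  have hnear : ∀ᶠ A in nhds A₀, spectrum ℂ A ⊆ Metric.thickening (δ / 2) (spectrum ℂ A₀) := by
    have h := (upperHemicontinuous_spectrum ℂ (Matrix n n ℂ)).upperHemicontinuousAt A₀
    have h' := upperHemicontinuousAt_iff.mp h _
      (Metric.isOpen_thickening.mem_nhdsSet.mpr
        (Metric.self_subset_thickening (half_pos hδ) (spectrum ℂ A₀)))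
    exact h'.mono fun A hA => subset_of_mem_nhdsSet hA
  obtain ⟨r, hr, hball⟩ := Metric.eventually_nhds_iff_ball.mp hnear
  set R : ℝ := (‖A₀‖ + r) * (1 + ‖(1 : Matrix n n ℂ)‖) with hR
  have hR0 : 0 ≤ R := by positivity
  obtain ⟨B, hB, hbound⟩ := exists_norm_aeval_sub_mul_prod_le (Matrix n n ℂ) K
    (ρ := δ / 4) (by positivity) hR0 (Fintype.card n)
  refine ⟨r, hr, B, hB, fun A hA p M hM hp => ?_⟩
  have hAn : ‖A‖ ≤ ‖A₀‖ + r := by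
    have := norm_le_norm_add_norm_sub' A A₀
    rw [mem_ball_iff_norm] at hA
    linarith
  have hsplit : A.charpoly = (A.charpoly.roots.map fun a => X - C a).prod :=
    (IsAlgClosed.splits A.charpoly).eq_prod_roots_of_monic A.charpoly_monic
  have hroots : ∀ a ∈ A.charpoly.roots, Metric.closedBall a (δ / 4) ⊆ K ∧ ‖a‖ ≤ R := by
    intro a ha
    have has : a ∈ spectrum ℂ A :=
      Matrix.mem_spectrum_iff_isRoot_charpoly.mpr (isRoot_of_mem_roots ha)
    refine ⟨fun w hw => interior_subset (hδK ?_), ?_⟩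
    · obtain ⟨b, hb, hab⟩ := Metric.mem_thickening_iff.mp (hball A hA has)
      refine Metric.mem_thickening_iff.mpr ⟨b, hb, ?_⟩
      have := dist_triangle w a b
      rw [Metric.mem_closedBall] at hw
      linarith
    · refine (spectrum.norm_le_norm_mul_of_mem has).trans ?_
      rw [hR]
      gcongr
      linarith
  have hAR : ‖A‖ ≤ R := by
    refine hAn.trans ?_
    have : 0 ≤ ‖A₀‖ + r := by positivity
    rw [hR]
    nlinarith [norm_nonneg (1 : Matrix n n ℂ)]
  obtain ⟨q, hq⟩ := hbound A.charpoly.roots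
    (by rw [← (IsAlgClosed.splits A.charpoly).natDegree_eq_card_roots, A.charpoly_natDegree_eq_dim])
    hroots A hAR p M hM hp
  rwa [← hsplit, map_sub, map_mul, Matrix.aeval_self_charpoly, mul_zero, sub_zero] at hq

end FunctionalCalculusBounds

section PolynomialDerivative

open scoped Matrix.Norms.Operator

variable {n : Type*} [Fintype n] [DecidableEq n]

/-- The algebraic relations satisfied by the value `F = f(A)` and the derivative `S = Df(A)` of
a polynomial (or holomorphic) function of a matrix. -/
structure IsMatrixFunctionJet (A F : Matrix n n ℝ) (S : Matrix n n ℝ →ₗ[ℝ] Matrix n n ℝ) :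
    Prop where
  commute : A * F = F * A
  map_bracket : ∀ X, S (A * X - X * A) = F * X - X * F
  bracket_map : ∀ X, A * S X - S X * A = F * X - X * F
  selfAdjoint : ∀ g : Matrix n n ℝ, g * A = Aᵀ * g → g * F = Fᵀ * g
  map_adjoint : ∀ g X Y : Matrix n n ℝ, g * A = Aᵀ * g → g * X = Yᵀ * g →
    g * S X = (S Y)ᵀ * g
  map_vecMulVec_swap : ∀ (g : Matrix n n ℝ) (u : n → ℝ), gᵀ = g → g * A = Aᵀ * g →
    ∀ i j k, S (vecMulVec u (g k)) i j = S (vecMulVec u (g j)) i k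

namespace IsMatrixFunctionJet

variable {A F F' : Matrix n n ℝ} {S S' : Matrix n n ℝ →ₗ[ℝ] Matrix n n ℝ}

theorem const (A : Matrix n n ℝ) (a : ℝ) :
    IsMatrixFunctionJet A (algebraMap ℝ (Matrix n n ℝ) a) 0 where
  commute := (Algebra.commutes a A).symm
  map_bracket X := by simp [Algebra.commutes a X]
  bracket_map X := by simp [Algebra.commutes a X]
  selfAdjoint g _ := by
    simp [Algebra.algebraMap_eq_smul_one]
  map_adjoint g X Y _ _ := by simp
  map_vecMulVec_swap g u _ _ i j k := by simp

theorem add (h : IsMatrixFunctionJet A F S) (h' : IsMatrixFunctionJet A F' S') :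
    IsMatrixFunctionJet A (F + F') (S + S') where
  commute := by rw [mul_add, add_mul, h.commute, h'.commute]
  map_bracket X := by
    rw [LinearMap.add_apply, h.map_bracket, h'.map_bracket]; noncomm_ring
  bracket_map X := by
    have h1 := h.bracket_map X
    have h2 := h'.bracket_map X
    rw [LinearMap.add_apply]
    calc _ = (A * S X - S X * A) + (A * S' X - S' X * A) := by noncomm_ring
      _ = _ := by rw [h1, h2]; noncomm_ring
  selfAdjoint g hg := by
    rw [mul_add, h.selfAdjoint g hg, h'.selfAdjoint g hg, transpose_add, add_mul]
  map_adjoint g X Y hg hXY := by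
    simp only [LinearMap.add_apply, transpose_add, mul_add, add_mul,
      h.map_adjoint g X Y hg hXY, h'.map_adjoint g X Y hg hXY]
  map_vecMulVec_swap g u hs hg i j k := by
    simp only [LinearMap.add_apply, Matrix.add_apply,
      h.map_vecMulVec_swap g u hs hg i j k, h'.map_vecMulVec_swap g u hs hg i j k]

theorem self_mul (h : IsMatrixFunctionJet A F S)
    (hS' : ∀ X, S' X = A * S X + X * F) :
    IsMatrixFunctionJet A (A * F) S' where
  commute := by rw [mul_assoc, ← h.commute]
  map_bracket X := by
    rw [hS', h.map_bracket]; noncomm_ring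
  bracket_map X := by
    have h1 : A * (A * S X) - A * (S X * A) = A * (F * X - X * F) := by
      rw [← mul_sub, h.bracket_map]
    rw [hS']
    calc _ = (A * (A * S X) - A * (S X * A)) + A * X * F - X * (F * A) := by noncomm_ring
      _ = _ := by rw [h1, ← h.commute]; noncomm_ring
  selfAdjoint g hg := by
    rw [← mul_assoc, hg, mul_assoc, h.selfAdjoint g hg, h.commute, transpose_mul, mul_assoc]
  map_adjoint g X Y hg hXY := by
    have h1 : A * S Y + Y * F = S Y * A + F * Y := by
      have := h.bracket_map Y
      rw [sub_eq_sub_iff_add_eq_add] at this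
      rw [this, add_comm]
    rw [hS', hS', h1, mul_add, ← mul_assoc, hg, mul_assoc, h.map_adjoint g X Y hg hXY,
      ← mul_assoc g, hXY, mul_assoc Yᵀ, h.selfAdjoint g hg]
    simp only [transpose_add, transpose_mul, add_mul, mul_assoc]
  map_vecMulVec_swap g u hs hg i j k := by
    have hsymm : (g * F) k j = (g * F) j k := by
      have h1 : g * F = (g * F)ᵀ := by
        rw [transpose_mul, hs, h.selfAdjoint g hg]
      exact congrFun (congrFun h1 k) j
    have hrow : ∀ a b, (vecMulVec u (g a) * F) i b = u i * (g * F) a b := by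
      intro a b
      simp [Matrix.mul_apply, vecMulVec_apply, Finset.mul_sum, mul_assoc]
    have h2 : (A * S (vecMulVec u (g k))) i j = (A * S (vecMulVec u (g j))) i k := by
      simp only [Matrix.mul_apply, h.map_vecMulVec_swap g u hs hg _ j k]
    rw [hS', hS', Matrix.add_apply, Matrix.add_apply, h2, hrow, hrow, hsymm]

theorem of_tendsto {F : ℕ → Matrix n n ℝ} {S : ℕ → Matrix n n ℝ →ₗ[ℝ] Matrix n n ℝ}
    (h : ∀ m, IsMatrixFunctionJet A (F m) (S m)) (hF : Tendsto F atTop (nhds F'))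
    (hSX : ∀ X, Tendsto (fun m => S m X) atTop (nhds (S' X))) :
    IsMatrixFunctionJet A F' S' := by
  have hT : ∀ {u : ℕ → Matrix n n ℝ} {v}, Tendsto u atTop (nhds v) →
      Tendsto (fun m => (u m)ᵀ) atTop (nhds vᵀ) := fun {u v} hu =>
    (continuous_id.matrix_transpose.tendsto v).comp hu
  refine ⟨?_, fun X => ?_, fun X => ?_, fun g hg => ?_, fun g X Y hg hXY => ?_,
    fun g u hs hg i j k => ?_⟩
  · refine tendsto_nhds_unique (hF.const_mul A) ?_
    simpa only [(h _).commute] using hF.mul_const A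
  · refine tendsto_nhds_unique (hSX _) ?_
    simpa only [(h _).map_bracket] using (hF.mul_const X).sub (hF.const_mul X)
  · refine tendsto_nhds_unique (((hSX X).const_mul A).sub ((hSX X).mul_const A)) ?_
    simpa only [(h _).bracket_map] using (hF.mul_const X).sub (hF.const_mul X)
  · refine tendsto_nhds_unique (hF.const_mul g) ?_
    simpa only [(h _).selfAdjoint g hg] using (hT hF).mul_const g
  · refine tendsto_nhds_unique ((hSX X).const_mul g) ?_
    simpa only [(h _).map_adjoint g X Y hg hXY] using (hT (hSX Y)).mul_const g
  · have hent : ∀ a b, Tendsto (fun m => S m (vecMulVec u (g a)) i b) atTop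
        (nhds (S' (vecMulVec u (g a)) i b)) := fun a b =>
      ((continuous_id.matrix_elem i b).tendsto _).comp (hSX _)
    refine tendsto_nhds_unique (hent k j) ?_
    simpa only [(h _).map_vecMulVec_swap g u hs hg i j k] using hent j k

end IsMatrixFunctionJet

theorem isMatrixFunctionJet_aeval {A : Matrix n n ℝ} {p : ℝ[X]}
    {S : Matrix n n ℝ →L[ℝ] Matrix n n ℝ}
    (hS : HasFDerivAt (fun B : Matrix n n ℝ => aeval B p) S A) :
    IsMatrixFunctionJet A (aeval A p) S.toLinearMap := by
  obtain ⟨S', hS', h⟩ : ∃ S' : Matrix n n ℝ →L[ℝ] Matrix n n ℝ,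
      HasFDerivAt (fun B : Matrix n n ℝ => aeval B p) S' A ∧
      IsMatrixFunctionJet A (aeval A p) S'.toLinearMap := by
    clear hS
    induction p using Polynomial.induction_on with
    | C a =>
      refine ⟨0, ?_, ?_⟩
      · simp only [aeval_C]
        exact hasFDerivAt_const (𝕜 := ℝ) (algebraMap ℝ (Matrix n n ℝ) a) A
      · simpa using IsMatrixFunctionJet.const A a
    | add p q hp hq =>
      obtain ⟨S, hS, hp⟩ := hp
      obtain ⟨S', hS', hq⟩ := hq
      refine ⟨S + S', ?_, ?_⟩
      · simp only [map_add]
        exact hS.add hS'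
      · simpa only [map_add] using! hp.add hq
    | monomial m a ih =>
      obtain ⟨S, hS, hp⟩ := ih
      have hmul : ∀ B : Matrix n n ℝ,
          aeval B (C a * X ^ (m + 1)) = B * aeval B (C a * X ^ m) := by
        intro B
        rw [show C a * X ^ (m + 1) = X * (C a * X ^ m) by ring, map_mul, aeval_X]
      have hd := (hasFDerivAt_id A).mul' hS
      refine ⟨A • S + MulOpposite.op (aeval A (C a * X ^ m)) •
        ContinuousLinearMap.id ℝ (Matrix n n ℝ), ?_, ?_⟩
      · simp only [hmul]
        exact hd
      · rw [hmul]
        exact hp.self_mul fun X => rfl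
  rwa [hS.unique hS']

theorem norm_map_ofReal (A : Matrix n n ℝ) : ‖A.map (algebraMap ℝ ℂ)‖ = ‖A‖ := by
  simp [Matrix.linfty_opNorm_def]

theorem aeval_map_ofReal (A : Matrix n n ℝ) (p : ℝ[X]) :
    aeval (A.map (algebraMap ℝ ℂ)) (p.map (algebraMap ℝ ℂ)) =
      (aeval A p).map (algebraMap ℝ ℂ) := by
  rw [aeval_map_algebraMap]
  exact aeval_algHom_apply (Algebra.ofId ℝ ℂ).mapMatrix A p

section BanachAlgebra

variable {𝔸 𝔹 : Type*} [NormedRing 𝔸] [NormedAlgebra ℝ 𝔸] [NormedRing 𝔹] [NormedAlgebra ℂ 𝔹]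

theorem differentiable_aeval {𝕜 : Type*} [NontriviallyNormedField 𝕜] {𝔸 : Type*} [NormedRing 𝔸]
    [NormedAlgebra 𝕜 𝔸] (p : 𝕜[X]) : Differentiable 𝕜 (fun Z : 𝔸 => aeval Z p) := by
  simp only [aeval_eq_sum_range]
  fun_prop

theorem norm_fderiv_aeval_le {K : Set ℂ} {c : 𝔸 →ₐ[ℝ] 𝔹}
    (hc : ∀ a, ‖c a‖ = ‖a‖)
    {A₀ : 𝔸} {r B : ℝ} (hr : 0 < r)
    (hbound : ∀ A ∈ Metric.ball (c A₀) r, ∀ (p : ℂ[X]) (M : ℝ), 0 ≤ M →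
      (∀ z ∈ K, ‖p.eval z‖ ≤ M) → ‖aeval A p‖ ≤ B * M)
    (hB : 0 ≤ B) {A : 𝔸} (hA : A ∈ Metric.ball A₀ (r / 2)) (p : ℝ[X]) {M : ℝ}
    (hM : 0 ≤ M) (hp : ∀ z ∈ K, ‖aeval z p‖ ≤ M) :
    ‖fderiv ℝ (fun B : 𝔸 => aeval B p) A‖ ≤ B * M * (2 / r) := by
  set S := fderiv ℝ (fun B : 𝔸 => aeval B p) A
  have hS : HasFDerivAt (fun B : 𝔸 => aeval B p) S A := (differentiable_aeval p A).hasFDerivAt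
  refine S.opNorm_le_bound (by positivity) fun Y => ?_
  rcases eq_or_ne Y 0 with rfl | hY
  · simp
  have hY0 : 0 < ‖Y‖ := norm_pos_iff.mpr hY
  let q : ℂ[X] := p.map (algebraMap ℝ ℂ)
  have hq : ∀ z ∈ K, ‖q.eval z‖ ≤ M := fun z hz => by
    simpa [q, eval_map_algebraMap] using hp z hz
  let G : ℂ → 𝔹 := fun z => aeval (c A + z • c Y) q
  have hGd : Differentiable ℂ G := by
    intro z
    have hl : Differentiable ℂ fun z : ℂ => c A + z • c Y := by fun_prop
    exact (differentiable_aeval q _).comp z (hl z)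
  have hG : ‖deriv G 0‖ ≤ B * M / (r / (2 * ‖Y‖)) := by
    refine Complex.norm_deriv_le_of_forall_mem_sphere_norm_le (by positivity)
      hGd.diffContOnCl fun z hz => hbound _ ?_ q M hM hq
    rw [mem_ball_iff_norm, add_sub_right_comm, ← map_sub]
    rw [mem_sphere_zero_iff_norm] at hz
    refine (norm_add_le _ _).trans_lt ?_
    rw [norm_smul, hz, hc, hc]
    rw [mem_ball_iff_norm] at hA
    have : r / (2 * ‖Y‖) * ‖Y‖ = r / 2 := by field_simp
    linarith
  have hline : HasDerivAt (fun t : ℝ => aeval (A + t • Y) p) (S Y) 0 := by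
    have h1 : HasDerivAt (fun t : ℝ => A + t • Y) Y 0 := by
      simpa using ((hasDerivAt_id (0 : ℝ)).smul_const Y).const_add A
    have hS' : HasFDerivAt (fun B : 𝔸 => aeval B p) S (A + (0 : ℝ) • Y) := by
      simpa using hS
    exact hS'.comp_hasDerivAt (0 : ℝ) h1
  have hcline : HasDerivAt (fun t : ℝ => c (aeval (A + t • Y) p)) (c (S Y)) 0 :=
    (c.toLinearMap.mkContinuous 1 fun a => by simp [hc]).hasFDerivAt.comp_hasDerivAt (0 : ℝ) hline
  have hGline : HasDerivAt (fun t : ℝ => c (aeval (A + t • Y) p)) (deriv G 0) 0 := by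
    have h := (hGd ((0 : ℝ) : ℂ)).hasDerivAt.scomp (0 : ℝ) Complex.ofRealCLM.hasDerivAt
    simp only [Complex.ofReal_zero, Complex.ofRealCLM_apply, Complex.ofReal_one, one_smul] at h
    have hcomp : (fun t : ℝ => c (aeval (A + t • Y) p)) = G ∘ Complex.ofReal := by
      funext t
      simp only [G, q, Function.comp_apply]
      rw [← aeval_algHom_apply, map_add, map_smul, Complex.coe_smul, aeval_map_algebraMap]
    rw [hcomp]
    exact h
  rw [← hc, hcline.unique hGline]
  refine hG.trans (le_of_eq ?_)
  field_simp

theorem exists_hasFDerivAt_limit_aeval [CompleteSpace 𝔸] {K : Set ℂ} {f : ℂ → ℂ} {p : ℕ → ℝ[X]}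
    (hp : TendstoUniformlyOn (fun m z => aeval z (p m)) f atTop K)
    {c₀ : 𝔸 →+* 𝔹} (hsmul : ∀ (t : ℝ) (a : 𝔸), c₀ (t • a) = (t : ℂ) • c₀ a)
    (hc₀ : ∀ a, ‖c₀ a‖ = ‖a‖) {A₀ : 𝔸} {r B : ℝ} (hr : 0 < r)
    (hbound : ∀ A ∈ Metric.ball (c₀ A₀) r, ∀ (p : ℂ[X]) (M : ℝ), 0 ≤ M →
      (∀ z ∈ K, ‖p.eval z‖ ≤ M) → ‖aeval A p‖ ≤ B * M)
    (hB : 0 ≤ B) :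
    ∃ Φ : 𝔸 → 𝔸, ∃ S : 𝔸 →L[ℝ] 𝔸,
      (∀ᶠ A in nhds A₀, Tendsto (fun m => aeval A (p m)) atTop (nhds (Φ A))) ∧
      HasFDerivAt Φ S A₀ ∧
      ∀ Y, Tendsto (fun m => fderiv ℝ (fun Z : 𝔸 => aeval Z (p m)) A₀ Y) atTop (nhds (S Y)) := by
  obtain ⟨c, rfl⟩ : ∃ c : 𝔸 →ₐ[ℝ] 𝔹, (c : 𝔸 →+* 𝔹) = c₀ := by
    refine ⟨{ c₀ with commutes' := fun t => ?_ }, rfl⟩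
    have h := hsmul t 1
    rw [map_one, Complex.coe_smul] at h
    rw [Algebra.algebraMap_eq_smul_one, Algebra.algebraMap_eq_smul_one]
    exact h
  have hc : ∀ a, ‖c a‖ = ‖a‖ := hc₀
  let D : ℕ → 𝔸 → (𝔸 →L[ℝ] 𝔸) := fun m =>
    fderiv ℝ (fun Z : 𝔸 => aeval Z (p m))
  have hD : ∀ m A, HasFDerivAt (fun Z : 𝔸 => aeval Z (p m)) (D m A) A := fun m A =>
    (differentiable_aeval (p m) A).hasFDerivAt
  have hcauchy := Metric.uniformCauchySeqOn_iff.mp hp.uniformCauchySeqOn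
  have hsmall : ∀ ε > 0, ∃ N, ∀ m ≥ N, ∀ k ≥ N, ∀ z ∈ K, ‖aeval z (p m - p k)‖ ≤ ε := by
    intro ε hε
    obtain ⟨N, hN⟩ := hcauchy ε hε
    refine ⟨N, fun m hm k hk z hz => ?_⟩
    rw [map_sub, ← dist_eq_norm]
    exact (hN m hm k hk z hz).le
  have hFc : ∀ A ∈ Metric.ball A₀ (r / 2), CauchySeq fun m => aeval A (p m) := by
    intro A hA
    refine Metric.cauchySeq_iff.mpr fun ε hε => ?_
    obtain ⟨N, hN⟩ := hsmall (ε / (B + 1) / 2) (by positivity)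
    refine ⟨N, fun m hm k hk => ?_⟩
    rw [dist_eq_norm, ← map_sub, ← hc, ← aeval_algHom_apply, ← aeval_map_algebraMap ℂ]
    have hA' : c A ∈ Metric.ball (c A₀) r := by
      rw [mem_ball_iff_norm] at hA ⊢
      rw [← map_sub, hc]
      linarith
    refine (hbound _ hA' _ (ε / (B + 1) / 2) (by positivity) fun z hz => ?_).trans_lt ?_
    · simpa [eval_map_algebraMap] using hN m hm k hk z hz
    · calc B * (ε / (B + 1) / 2) = (B / (B + 1)) * (ε / 2) := by ring
        _ ≤ 1 * (ε / 2) := by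
          gcongr
          rw [div_le_one (by positivity)]
          linarith
        _ < ε := by linarith
  have hDc : UniformCauchySeqOn D atTop (Metric.ball A₀ (r / 2)) := by
    refine Metric.uniformCauchySeqOn_iff.mpr fun ε hε => ?_
    obtain ⟨N, hN⟩ := hsmall (ε / (B * (2 / r) + 1) / 2) (by positivity)
    refine ⟨N, fun m hm k hk A hA => ?_⟩
    have hsub : D m A - D k A = fderiv ℝ (fun Z : 𝔸 => aeval Z (p m - p k)) A := by
      simp only [map_sub]
      exact ((hD m A).sub (hD k A)).fderiv.symm
    rw [dist_eq_norm, hsub]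
    refine (norm_fderiv_aeval_le hc hr hbound hB hA _ (by positivity) (hN m hm k hk)).trans_lt ?_
    calc B * (ε / (B * (2 / r) + 1) / 2) * (2 / r)
        = (B * (2 / r) / (B * (2 / r) + 1)) * (ε / 2) := by ring
      _ ≤ 1 * (ε / 2) := by
        gcongr
        rw [div_le_one (by positivity)]
        linarith
      _ < ε := by linarith
  have hlimF : ∀ A, ∃ Z, A ∈ Metric.ball A₀ (r / 2) →
      Tendsto (fun m => aeval A (p m)) atTop (nhds Z) := by
    intro A
    by_cases hA : A ∈ Metric.ball A₀ (r / 2)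
    · obtain ⟨Z, hZ⟩ := cauchySeq_tendsto_of_complete (hFc A hA)
      exact ⟨Z, fun _ => hZ⟩
    · exact ⟨0, fun h => absurd h hA⟩
  have hlimD : ∀ A, ∃ S, A ∈ Metric.ball A₀ (r / 2) →
      Tendsto (fun m => D m A) atTop (nhds S) := by
    intro A
    by_cases hA : A ∈ Metric.ball A₀ (r / 2)
    · obtain ⟨Z, hZ⟩ := cauchySeq_tendsto_of_complete (hDc.cauchySeq (ι := ℕ) hA)
      exact ⟨Z, fun _ => hZ⟩
    · exact ⟨0, fun h => absurd h hA⟩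
  choose Φ hΦ using hlimF
  choose S hS using hlimD
  have hmem : A₀ ∈ Metric.ball A₀ (r / 2) := Metric.mem_ball_self (half_pos hr)
  refine ⟨Φ, S A₀, ?_, ?_, ?_⟩
  · exact Filter.eventually_of_mem (Metric.ball_mem_nhds A₀ (half_pos hr)) hΦ
  · exact hasFDerivAt_of_tendstoUniformlyOn Metric.isOpen_ball
      (hDc.tendstoUniformlyOn_of_tendsto hS) (fun m A _ => hD m A) hΦ hmem
  · intro Y
    exact ((ContinuousLinearMap.apply ℝ 𝔸 Y).continuous.tendsto (S A₀)).comp (hS A₀ hmem)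

end BanachAlgebra

theorem exists_isMatrixFunctionJet_limit_aeval {K : Set ℂ} {f : ℂ → ℂ} {p : ℕ → ℝ[X]}
    (hp : TendstoUniformlyOn (fun m z => aeval z (p m)) f atTop K) (A₀ : Matrix n n ℝ)
    (hA₀ : spectrum ℂ (A₀.map (algebraMap ℝ ℂ)) ⊆ interior K) :
    ∃ Φ : Matrix n n ℝ → Matrix n n ℝ, ∃ S : Matrix n n ℝ →L[ℝ] Matrix n n ℝ,
      (∀ᶠ A in nhds A₀, Tendsto (fun m => aeval A (p m)) atTop (nhds (Φ A))) ∧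
      HasFDerivAt Φ S A₀ ∧ IsMatrixFunctionJet A₀ (Φ A₀) S.toLinearMap := by
  obtain ⟨r, hr, B, hB, hbound⟩ := exists_ball_norm_aeval_le _ hA₀
  obtain ⟨Φ, S, hΦ, hS, hlim⟩ := exists_hasFDerivAt_limit_aeval (𝔸 := Matrix n n ℝ)
    (c₀ := (algebraMap ℝ ℂ).mapMatrix) (A₀ := A₀) (B := B) (r := r) hp
    (fun t a => by ext i j; simp) norm_map_ofReal hr hbound hB
  refine ⟨Φ, S, hΦ, hS, ?_⟩
  have hjet : ∀ m, IsMatrixFunctionJet A₀ (aeval A₀ (p m))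
      (fderiv ℝ (fun Z : Matrix n n ℝ => aeval Z (p m)) A₀).toLinearMap := fun m =>
    isMatrixFunctionJet_aeval (differentiable_aeval (p m) A₀).hasFDerivAt
  exact IsMatrixFunctionJet.of_tendsto hjet hΦ.self_of_nhds hlim

theorem det_ne_zero_of_tendsto_aeval {K : Set ℂ} {f : ℂ → ℂ} {p : ℕ → ℝ[X]}
    (hp : TendstoUniformlyOn (fun m z => aeval z (p m)) f atTop K) {A F : Matrix n n ℝ}
    (hA : spectrum ℂ (A.map (algebraMap ℝ ℂ)) ⊆ K)
    (hf : ∀ z ∈ spectrum ℂ (A.map (algebraMap ℝ ℂ)), f z ≠ 0)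
    (hF : Tendsto (fun m => aeval A (p m)) atTop (nhds F)) : F.det ≠ 0 := by
  set Z := A.map (algebraMap ℝ ℂ) with hZ
  have hfin : (spectrum ℂ Z).Finite := Module.End.finite_spectrum (toLin' Z) |>.subset
    (by rw [Matrix.spectrum_toLin'])
  obtain ⟨c, hc, hcf⟩ : ∃ c > 0, ∀ z ∈ spectrum ℂ Z, c ≤ ‖f z‖ := by
    have h : ∀ᶠ c in nhdsWithin (0 : ℝ) (Set.Ioi 0), ∀ z ∈ spectrum ℂ Z, c ≤ ‖f z‖ := by
      rw [Filter.eventually_all_finite hfin]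
      intro z hz
      exact Filter.Eventually.filter_mono nhdsWithin_le_nhds
        (eventually_le_nhds (norm_pos_iff.mpr (hf z hz)))
    obtain ⟨c, hc, h0⟩ := (h.and self_mem_nhdsWithin).exists
    exact ⟨c, h0, hc⟩
  have hev : ∀ᶠ m in atTop, (c / 2) ^ Fintype.card n ≤ |(aeval A (p m)).det| := by
    filter_upwards [Metric.tendstoUniformlyOn_iff.mp hp (c / 2) (half_pos hc)] with m hm
    have hroot : ∀ w ∈ (aeval Z ((p m).map (algebraMap ℝ ℂ))).charpoly.roots, c / 2 ≤ ‖w‖ := by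
      intro w hw
      have hw' := Matrix.mem_spectrum_iff_isRoot_charpoly.mpr (isRoot_of_mem_roots hw)
      rcases isEmpty_or_nonempty n with hn | hn
      · exact absurd hw' (by simp [spectrum.of_subsingleton])
      rw [spectrum.map_polynomial_aeval] at hw'
      obtain ⟨z, hz, rfl⟩ := hw'
      have h1 := hm z (hA hz)
      have h2 := hcf z hz
      simp only [eval_map_algebraMap]
      rw [dist_eq_norm] at h1
      have := norm_le_norm_add_norm_sub' (f z) (aeval z (p m))
      linarith
    have hdet : ((aeval A (p m)).det : ℂ) = (aeval Z ((p m).map (algebraMap ℝ ℂ))).det := by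
      rw [hZ, aeval_map_ofReal]
      exact RingHom.map_det (algebraMap ℝ ℂ) (aeval A (p m))
    rw [← Real.norm_eq_abs, ← Complex.norm_real, hdet, Matrix.det_eq_prod_roots_charpoly,
      ← Matrix.charpoly_natDegree_eq_dim (aeval Z ((p m).map (algebraMap ℝ ℂ))),
      (IsAlgClosed.splits _).natDegree_eq_card_roots]
    generalize (aeval Z ((p m).map (algebraMap ℝ ℂ))).charpoly.roots = s at hroot
    induction s using Multiset.induction_on with
    | empty => simp
    | cons a s ih =>
      rw [Multiset.card_cons, Multiset.prod_cons, norm_mul, pow_succ']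
      gcongr
      · exact hroot a (Multiset.mem_cons_self a s)
      · exact ih fun w hw => hroot w (Multiset.mem_cons_of_mem hw)
  have hlim : Tendsto (fun m => |(aeval A (p m)).det|) atTop (nhds |F.det|) :=
    ((continuous_id.matrix_det.abs).tendsto F).comp hF
  have := ge_of_tendsto hlim hev
  exact abs_pos.mp (lt_of_lt_of_le (by positivity) this)

end PolynomialDerivative

open scoped Matrix.Norms.Operator in
theorem exists_isMatrixFunctionJet_fderiv {E : Type*} [NormedAddCommGroup E] [NormedSpace ℝ E]
    {n : Type*} [Fintype n] [DecidableEq n] {K : Set ℂ} {f : ℂ → ℂ} {p : ℕ → ℝ[X]}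
    (hp : TendstoUniformlyOn (fun m z => aeval z (p m)) f atTop K)
    {A F : E → Matrix n n ℝ} {x : E}
    (hA : ∀ i j, DifferentiableAt ℝ (fun y => A y i j) x)
    (hspec : spectrum ℂ ((A x).map (algebraMap ℝ ℂ)) ⊆ interior K)
    (hF : ∀ᶠ y in nhds x, ∀ i j,
      Tendsto (fun m => aeval (A y) (p m) i j) atTop (nhds (F y i j))) :
    ∃ S : Matrix n n ℝ →ₗ[ℝ] Matrix n n ℝ, IsMatrixFunctionJet (A x) (F x) S ∧
      ∀ i j, DifferentiableAt ℝ (fun y => F y i j) x ∧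
        ∀ v, fderiv ℝ (fun y => F y i j) x v =
          S (of fun a b => fderiv ℝ (fun y => A y a b) x v) i j := by
  obtain ⟨Φ, S, hΦ, hS, hjet⟩ := exists_isMatrixFunctionJet_limit_aeval hp (A x) hspec
  let T : (n → n → ℝ) →L[ℝ] Matrix n n ℝ := (Matrix.ofLinearEquiv ℝ).toLinearMap.toContinuousLinearMap
  have hA' : HasFDerivAt A (T.comp (ContinuousLinearMap.pi fun i => ContinuousLinearMap.pi fun j =>
      fderiv ℝ (fun y => A y i j) x)) x := by
    have h : HasFDerivAt (fun y i j => A y i j) (ContinuousLinearMap.pi fun i =>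
        ContinuousLinearMap.pi fun j => fderiv ℝ (fun y => A y i j) x) x :=
      hasFDerivAt_pi.mpr fun i => hasFDerivAt_pi.mpr fun j => (hA i j).hasFDerivAt
    exact T.hasFDerivAt.comp x h
  have hcomp := hS.comp x hA'
  have heq : ∀ᶠ y in nhds x, F y = Φ (A y) := by
    filter_upwards [hF, hA'.continuousAt.eventually hΦ] with y h1 h2
    ext i j
    exact tendsto_nhds_unique (h1 i j) (((continuous_id.matrix_elem i j).tendsto _).comp h2)
  have hF' := hcomp.congr_of_eventuallyEq heq
  rw [heq.self_of_nhds]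
  refine ⟨S.toLinearMap, hjet, fun i j => ?_⟩
  let e : Matrix n n ℝ →L[ℝ] ℝ := (Matrix.entryLinearMap ℝ ℝ i j).toContinuousLinearMap
  have hij : HasFDerivAt (fun y => F y i j) _ x := e.hasFDerivAt.comp x hF'
  refine ⟨hij.differentiableAt, fun v => ?_⟩
  rw [hij.fderiv]
  rfl

section ConnectionAlgebra

variable {n : Type*} [Fintype n] [DecidableEq n]

theorem metric_mul_compat {h G T F dh dF B : Matrix n n ℝ} (hF : IsUnit F.det)
    (hhF : h * F = Fᵀ * h) (hdh : dh = h * G + Gᵀ * h) (hT : T = F⁻¹ * B)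
    (hdF : h * dF = h * B + Bᵀ * h + h * (F * G - G * F)) :
    dh * F + h * dF = h * F * (G + T) + (G + T)ᵀ * (h * F) := by
  have h1 : h * F * T = h * B := by
    rw [hT, mul_assoc, mul_nonsing_inv_cancel_left _ _ hF]
  have h2 : Tᵀ * (h * F) = Bᵀ * h := by
    rw [hT, hhF, transpose_mul, transpose_nonsing_inv, mul_assoc,
      nonsing_inv_mul_cancel_left _ _ (by rwa [det_transpose])]
  rw [hdF, hdh, mul_add (h * F), transpose_add, add_mul Gᵀ, h1, h2]
  noncomm_ring

/-- The covariant derivative of `L` when `gb * L = c • g` and the connections of `g` and `gb` are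
projectively related. -/
theorem covariant_derivative_of_projective {g gb L G Gb dg dgb dL : Matrix n n ℝ} {c : ℝ}
    {φ : n → ℝ} {k : n} (hgb : IsUnit gb.det) (hL : gb * L = c • g)
    (hdg : dg = g * G + Gᵀ * g) (hdgb : dgb = gb * Gb + Gbᵀ * gb)
    (hGb : Gb = G + φ k • (1 : Matrix n n ℝ) + vecMulVec (Pi.single k 1) φ)
    (hdL : dgb * L + gb * dL = (2 * c * φ k) • g + c • dg) :
    dL = vecMulVec (-(c • gb⁻¹ *ᵥ φ)) (g k) - vecMulVec (Pi.single k 1) φ * L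
      + (L * G - G * L) := by
  have hrow : vecMulVec φ (Pi.single k 1) * g = vecMulVec φ (g k) := by
    rw [vecMulVec_mul, single_one_vecMul]; rfl
  have hinv : gb * vecMulVec (-(c • gb⁻¹ *ᵥ φ)) (g k) = -(c • vecMulVec φ (g k)) := by
    rw [mul_vecMulVec, mulVec_neg, mulVec_smul, mulVec_mulVec, mul_nonsing_inv _ hgb, one_mulVec,
      neg_vecMulVec, smul_vecMulVec]
  have hcancel : ∀ X Y : Matrix n n ℝ, gb * X = gb * Y → X = Y := fun X Y hXY => by
    rw [← nonsing_inv_mul_cancel_left gb X hgb, hXY, nonsing_inv_mul_cancel_left gb Y hgb]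
  apply hcancel
  set E := vecMulVec (Pi.single k 1) φ with hE
  have hET : Eᵀ * g = vecMulVec φ (g k) := by rw [hE, transpose_vecMulVec, hrow]
  have h1 : gb * dL = (2 * c * φ k) • g + c • dg - dgb * L := by rw [← hdL]; abel
  have h2 : dgb * L = gb * G * L + φ k • (c • g) + gb * E * L
      + (Gᵀ * (c • g) + φ k • (c • g) + Eᵀ * (c • g)) := by
    rw [hdgb, add_mul, mul_assoc Gbᵀ, hL, hGb]
    simp only [transpose_add, transpose_smul, transpose_one, mul_add, add_mul, Matrix.mul_smul, Matrix.smul_mul,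
      mul_one, one_mul, hL, smul_comm c (φ k)]
  rw [h1, h2, mul_add, mul_sub, hinv, mul_sub, ← mul_assoc gb L, hL, hdg, ← hET]
  simp only [Matrix.mul_smul, Matrix.smul_mul, smul_add, smul_smul]
  have h3 : φ k * c + φ k * c = 2 * c * φ k := by ring
  rw [← h3, add_smul, mul_assoc gb, mul_assoc gb]
  abel

theorem IsMatrixFunctionJet.metric_mul_derivatives
    {g gb L F G Gb dg dgb dL dF : Matrix n n ℝ} {S : Matrix n n ℝ →ₗ[ℝ] Matrix n n ℝ} {c : ℝ}
    {φ : n → ℝ} {k : n} (hjet : IsMatrixFunctionJet L F S) (hF : IsUnit F.det)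
    (hg : gᵀ = g) (hgbs : gbᵀ = gb)
    (hgb : IsUnit gb.det) (hL : gb * L = c • g)
    (hdg : dg = g * G + Gᵀ * g) (hdgb : dgb = gb * Gb + Gbᵀ * gb)
    (hGb : Gb = G + φ k • (1 : Matrix n n ℝ) + vecMulVec (Pi.single k 1) φ)
    (hdL : dgb * L + gb * dL = (2 * c * φ k) • g + c • dg) (hdF : dF = S dL)
    {T : Matrix n n ℝ} (hT : T = F⁻¹ * S (vecMulVec (-(c • gb⁻¹ *ᵥ φ)) (g k))) :
    dg * F + g * dF = g * F * (G + T) + (G + T)ᵀ * (g * F) ∧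
      dgb * F + gb * dF = gb * F * (Gb + T) + (Gb + T)ᵀ * (gb * F) := by
  have hcov := covariant_derivative_of_projective hgb hL hdg hdgb hGb hdL
  set P := vecMulVec (-(c • gb⁻¹ *ᵥ φ)) (g k) with hP
  set E := vecMulVec (Pi.single k 1) φ with hE
  have hLe : L = c • (gb⁻¹ * g) := by
    rw [← nonsing_inv_mul_cancel_left gb L hgb, hL, Matrix.mul_smul]
  have hgbLs : gb * L = Lᵀ * gb := by
    have := congrArg transpose hL
    rw [transpose_mul, transpose_smul, hg, hgbs] at this
    rw [this, hL]
  have hgLs : g * L = Lᵀ * g := by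
    rw [hLe, transpose_smul, transpose_mul, transpose_nonsing_inv, hg, hgbs, Matrix.mul_smul, Matrix.smul_mul,
      mul_assoc]
  have hPT : Pᵀ = g * vecMulVec (Pi.single k 1) (-(c • gb⁻¹ *ᵥ φ)) := by
    rw [hP, transpose_vecMulVec, mul_vecMulVec, mulVec_single_one]
    congr 1
    nth_rewrite 1 [← hg]
    rfl
  have hvec : (gb⁻¹ *ᵥ φ) = φ ᵥ* gb⁻¹ := by
    rw [← mulVec_transpose, transpose_nonsing_inv, hgbs]
  have hPg : g * (-(E * L)) = Pᵀ * g := by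
    rw [hPT, mul_assoc, hE, vecMulVec_mul, vecMulVec_mul, neg_vecMul, hLe, vecMul_smul, smul_vecMul,
      hvec, vecMul_vecMul, vecMulVec_neg]
  have hPgb : gb * (-(L * E)) = Pᵀ * gb := by
    rw [hPT, mul_assoc, hE, vecMulVec_mul, neg_vecMul, smul_vecMul, hvec, vecMul_vecMul,
      nonsing_inv_mul _ hgb, vecMul_one, mul_neg, ← mul_assoc, hL, vecMulVec_neg, mul_neg,
      vecMulVec_smul, Matrix.smul_mul, Matrix.mul_smul]
  have hSg : g * S (-(E * L)) = (S P)ᵀ * g := hjet.map_adjoint g _ _ hgLs hPg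
  have hSgb : gb * S (-(L * E)) = (S P)ᵀ * gb := hjet.map_adjoint gb _ _ hgbLs hPgb
  have hdF' : dF = S P + S (-(E * L)) + (F * G - G * F) := by
    rw [hdF, hcov, sub_eq_add_neg P, map_add, map_add, hjet.map_bracket]
  constructor
  · refine metric_mul_compat hF (hjet.selfAdjoint g hgLs) hdg hT ?_
    rw [hdF', mul_add, mul_add, hSg]
  · refine metric_mul_compat hF (hjet.selfAdjoint gb hgbLs) hdgb hT ?_
    have hb := hjet.map_bracket E
    have h1 : S (-(E * L)) = S (-(L * E)) + (F * E - E * F) := by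
      rw [← hb, ← map_add]; congr 1; abel
    have h2 : F * Gb - Gb * F = F * G - G * F + (F * E - E * F) := by
      rw [hGb]
      simp only [mul_add, add_mul, Matrix.mul_smul, Matrix.smul_mul, mul_one, one_mul]
      abel
    rw [hdF', h1, h2, ← hSgb]
    noncomm_ring

end ConnectionAlgebra

section Calculus

variable {n : Type} [Fintype n] [DecidableEq n]

/-- The entrywise partial derivative of a matrix-valued function. -/
def pdMatrix (k : n) (A : (n → ℝ) → Matrix n n ℝ) (x : n → ℝ) : Matrix n n ℝ :=
  of fun i j => pd k (fun y => A y i j) x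

/-- The connection matrix `(Γ_k)^i_j = Γ^i_{kj}`. -/
def christoffelMatrix (g : (n → ℝ) → Matrix n n ℝ) (x : n → ℝ) (k : n) : Matrix n n ℝ :=
  of fun i j => christoffel g x i k j

/-- Entrywise differentiability at a point. -/
def EntriesDifferentiableAt (A : (n → ℝ) → Matrix n n ℝ) (x : n → ℝ) : Prop :=
  ∀ i j, DifferentiableAt ℝ (fun y => A y i j) x

theorem pdMatrix_congr {k : n} {A B : (n → ℝ) → Matrix n n ℝ} {x : n → ℝ}
    (h : A =ᶠ[nhds x] B) : pdMatrix k A x = pdMatrix k B x := by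
  ext i j
  have : (fun y => A y i j) =ᶠ[nhds x] fun y => B y i j := h.mono fun y hy => by simp only [hy]
  simp only [pdMatrix, pd, of_apply, this.fderiv_eq]

theorem pdMatrix_transpose (k : n) (A : (n → ℝ) → Matrix n n ℝ) (x : n → ℝ) :
    pdMatrix k (fun y => (A y)ᵀ) x = (pdMatrix k A x)ᵀ := rfl

theorem pdMatrix_mul {k : n} {A B : (n → ℝ) → Matrix n n ℝ} {x : n → ℝ}
    (hA : EntriesDifferentiableAt A x) (hB : EntriesDifferentiableAt B x) :
    pdMatrix k (fun y => A y * B y) x = pdMatrix k A x * B x + A x * pdMatrix k B x := by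
  ext i j
  have h : HasFDerivAt (fun y => ∑ l, A y i l * B y l j)
      (∑ l, (A x i l • fderiv ℝ (fun y => B y l j) x
        + B x l j • fderiv ℝ (fun y => A y i l) x)) x :=
    HasFDerivAt.fun_sum fun l _ => (hA i l).hasFDerivAt.mul (hB l j).hasFDerivAt
  simp only [pdMatrix, pd, of_apply, Matrix.add_apply, Matrix.mul_apply, h.fderiv,
    _root_.sum_apply, _root_.add_apply, _root_.smul_apply,
    smul_eq_mul, ← Finset.sum_add_distrib]
  exact Finset.sum_congr rfl fun l _ => by ring

theorem pdMatrix_smul {k : n} {c : (n → ℝ) → ℝ} {A : (n → ℝ) → Matrix n n ℝ} {x : n → ℝ}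
    (hc : DifferentiableAt ℝ c x) (hA : EntriesDifferentiableAt A x) :
    pdMatrix k (fun y => c y • A y) x = pd k c x • A x + c x • pdMatrix k A x := by
  ext i j
  have h := hc.hasFDerivAt.fun_mul (hA i j).hasFDerivAt
  simp only [pdMatrix, pd, of_apply, Matrix.add_apply, Matrix.smul_apply, smul_eq_mul]
  rw [HasFDerivAt.fderiv h]
  simp only [_root_.add_apply, _root_.smul_apply, smul_eq_mul]
  ring

/-- Jacobi's formula for the derivative of a determinant. -/
theorem differentiableAt_det_and_pd_det {A : (n → ℝ) → Matrix n n ℝ} {x : n → ℝ}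
    (hA : EntriesDifferentiableAt A x) :
    DifferentiableAt ℝ (fun y => (A y).det) x ∧
      ∀ k, pd k (fun y => (A y).det) x = ((A x).adjugate * pdMatrix k A x).trace := by
  have h : HasFDerivAt (fun y => (A y).det) (∑ σ : Equiv.Perm n, (Equiv.Perm.sign σ : ℝ) •
      ∑ i, (∏ j ∈ Finset.univ.erase i, A x (σ j) j) • fderiv ℝ (fun y => A y (σ i) i) x) x := by
    simp only [det_apply']
    refine HasFDerivAt.fun_sum fun σ _ => HasFDerivAt.const_mul ?_ _
    exact HasFDerivAt.finsetProd fun i _ => (hA (σ i) i).hasFDerivAt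
  refine ⟨h.differentiableAt, fun k => ?_⟩
  have hcol : ∀ i, ((A x).adjugate * pdMatrix k A x) i i =
      ((A x).updateCol i fun l => pdMatrix k A x l i).det := by
    intro i
    rw [← cramer_apply, cramer_eq_adjugate_mulVec]
    rfl
  rw [pd, h.fderiv, Matrix.trace]
  simp only [diag_apply, hcol, det_apply', _root_.sum_apply,
    _root_.smul_apply, smul_eq_mul, Finset.mul_sum]
  rw [Finset.sum_comm]
  refine Finset.sum_congr rfl fun i _ => Finset.sum_congr rfl fun σ _ => ?_
  rw [← Finset.prod_erase_mul _ _ (Finset.mem_univ i), updateCol_self]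
  congr 2
  refine Finset.prod_congr rfl fun j hj => ?_
  rw [updateCol_ne (Finset.ne_of_mem_erase hj)]

theorem mul_christoffelMatrix_apply {g : (n → ℝ) → Matrix n n ℝ} {x : n → ℝ}
    (hg : IsUnit (g x).det) (k m j : n) :
    (g x * christoffelMatrix g x k) m j = (1 / 2) *
      (pdMatrix k g x m j + pdMatrix j g x m k - pdMatrix m g x k j) := by
  let w : n → ℝ := fun m => (1 / 2) *
      (pdMatrix k g x m j + pdMatrix j g x m k - pdMatrix m g x k j)
  have h : (fun i => christoffelMatrix g x k i j) = (g x)⁻¹ *ᵥ w := by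
    ext i
    simp only [christoffelMatrix, of_apply, christoffel, mulVec, dotProduct, w, pdMatrix,
      Finset.mul_sum]
    exact Finset.sum_congr rfl fun l _ => by ring
  have h2 : (g x * christoffelMatrix g x k) m j =
      (g x *ᵥ fun i => christoffelMatrix g x k i j) m := rfl
  rw [h2, h, mulVec_mulVec, mul_nonsing_inv _ hg, one_mulVec]

theorem pdMatrix_eq_christoffelMatrix {g : (n → ℝ) → Matrix n n ℝ} {x : n → ℝ}
    (hg : IsUnit (g x).det) (hs : (g x)ᵀ = g x) (hsym : ∀ k, (pdMatrix k g x)ᵀ = pdMatrix k g x)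
    (k : n) :
    pdMatrix k g x = g x * christoffelMatrix g x k + (christoffelMatrix g x k)ᵀ * g x := by
  have hT : (christoffelMatrix g x k)ᵀ * g x = (g x * christoffelMatrix g x k)ᵀ := by
    rw [transpose_mul, hs]
  have hsym' : ∀ k i j, pdMatrix k g x i j = pdMatrix k g x j i := fun k i j =>
    congrFun (congrFun (hsym k) j) i
  ext i j
  rw [hT, Matrix.add_apply, transpose_apply, mul_christoffelMatrix_apply hg,
    mul_christoffelMatrix_apply hg, hsym' i k j, hsym' j k i, hsym' k j i]
  ring

theorem christoffelMatrix_eq_of_compat {h : (n → ℝ) → Matrix n n ℝ} {x : n → ℝ}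
    (hh : IsUnit (h x).det) (hs : (h x)ᵀ = h x) {T : n → Matrix n n ℝ}
    (hT : ∀ i j k, T k i j = T j i k)
    (hcompat : ∀ k, pdMatrix k h x = h x * T k + (T k)ᵀ * h x) (k : n) :
    christoffelMatrix h x k = T k := by
  have hswap : ∀ m k j, (h x * T k) m j = (h x * T j) m k := by
    intro m k j
    simp only [Matrix.mul_apply, hT _ j k]
  have hpd : ∀ k m j, pdMatrix k h x m j = (h x * T k) m j + (h x * T k) j m := by
    intro k m j
    have h1 : (T k)ᵀ * h x = (h x * T k)ᵀ := by rw [transpose_mul, hs]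
    rw [hcompat, h1, Matrix.add_apply, transpose_apply]
  have hmul : h x * christoffelMatrix h x k = h x * T k := by
    ext m j
    rw [mul_christoffelMatrix_apply hh, hpd, hpd, hpd, hswap m j k, hswap k j m, hswap j m k]
    ring
  rw [← nonsing_inv_mul_cancel_left (h x) (christoffelMatrix h x k) hh, hmul,
    nonsing_inv_mul_cancel_left (h x) (T k) hh]

end Calculus

section Projective

variable {n : Type} [Fintype n] [DecidableEq n]

theorem pd_det_eq {g : (n → ℝ) → Matrix n n ℝ} {x : n → ℝ} (hd : EntriesDifferentiableAt g x)
    (hg : IsUnit (g x).det) {k : n} {G : Matrix n n ℝ}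
    (hG : pdMatrix k g x = g x * G + Gᵀ * g x) :
    pd k (fun y => (g y).det) x = (g x).det * (2 * G.trace) := by
  have hadj : (g x).adjugate = (g x).det • (g x)⁻¹ := by
    rw [Matrix.inv_def, smul_smul, Ring.mul_inverse_cancel _ hg, one_smul]
  rw [(differentiableAt_det_and_pd_det hd).2 k, hadj, hG, Matrix.smul_mul, trace_smul, mul_add, trace_add,
    nonsing_inv_mul_cancel_left _ _ hg, trace_mul_comm _ (Gᵀ * g x), mul_assoc,
    mul_nonsing_inv _ hg, mul_one, trace_transpose, smul_eq_mul, two_mul]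

/-- The conformal factor `(det ḡ / det g)^{1/(n+1)}`. -/
def detRatioRoot (g gb : (n → ℝ) → Matrix n n ℝ) (x : n → ℝ) : ℝ :=
  ((gb x).det / (g x).det) ^ ((1 : ℝ) / (Fintype.card n + 1))

theorem pd_detRatioRoot {g gb : (n → ℝ) → Matrix n n ℝ} {x : n → ℝ}
    (hdg : EntriesDifferentiableAt g x) (hdgb : EntriesDifferentiableAt gb x)
    (hg : IsUnit (g x).det) (hgb : IsUnit (gb x).det) :
    DifferentiableAt ℝ (detRatioRoot g gb) x ∧ ∀ (k : n) (G Gb : Matrix n n ℝ) (φ : n → ℝ),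
      pdMatrix k g x = g x * G + Gᵀ * g x → pdMatrix k gb x = gb x * Gb + Gbᵀ * gb x →
      Gb = G + φ k • (1 : Matrix n n ℝ) + vecMulVec (Pi.single k 1) φ →
      pd k (detRatioRoot g gb) x = 2 * detRatioRoot g gb x * φ k := by
  have h1 := (differentiableAt_det_and_pd_det hdg).1.hasFDerivAt
  have h2 := (differentiableAt_det_and_pd_det hdgb).1.hasFDerivAt
  have hne : (g x).det ≠ 0 := hg.ne_zero
  have hneb : (gb x).det ≠ 0 := hgb.ne_zero
  have hinv : HasFDerivAt (fun y => ((g y).det)⁻¹)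
      ((-((g x).det ^ 2)⁻¹) • fderiv ℝ (fun y => (g y).det) x) x :=
    (hasDerivAt_inv hne).comp_hasFDerivAt x h1
  have h3 : HasFDerivAt (detRatioRoot g gb) _ x := (h2.fun_mul hinv).rpow_const (p := (1 : ℝ) / (Fintype.card n + 1))
    (Or.inl (mul_ne_zero hneb (inv_ne_zero hne)))
  refine ⟨h3.differentiableAt, fun k G Gb φ hG hGb hφ => ?_⟩
  have htr : Gb.trace = G.trace + (Fintype.card n + 1) * φ k := by
    rw [hφ, trace_add, trace_add, trace_smul, trace_one, trace_vecMulVec, single_one_dotProduct,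
      smul_eq_mul]
    ring
  have e1 := pd_det_eq hdg hg hG
  have e2 := pd_det_eq hdgb hgb hGb
  have hc : (Fintype.card n + 1 : ℝ) ≠ 0 := by positivity
  unfold pd at e1 e2 ⊢
  rw [h3.fderiv]
  simp only [_root_.add_apply, _root_.smul_apply, smul_eq_mul, e1, e2, htr]
  rw [Real.rpow_sub_one (mul_ne_zero hneb (inv_ne_zero hne)), detRatioRoot, div_eq_mul_inv (gb x).det]
  field_simp
  ring

theorem contDiffOn_det {N : WithTop ℕ∞} {U : Set (n → ℝ)} {A : (n → ℝ) → Matrix n n ℝ}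
    (hA : ∀ i j, ContDiffOn ℝ N (fun x => A x i j) U) :
    ContDiffOn ℝ N (fun x => (A x).det) U := by
  simp only [det_apply']
  exact ContDiffOn.sum fun σ _ => contDiffOn_const.mul (contDiffOn_prod fun i _ => hA (σ i) i)

theorem contDiffOn_nonsing_inv {N : WithTop ℕ∞} {U : Set (n → ℝ)} {A : (n → ℝ) → Matrix n n ℝ}
    (hA : ∀ i j, ContDiffOn ℝ N (fun x => A x i j) U) (hdet : ∀ x ∈ U, IsUnit (A x).det) (i j : n) :
    ContDiffOn ℝ N (fun x => (A x)⁻¹ i j) U := by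
  have hadj : ContDiffOn ℝ N (fun x => (A x).adjugate i j) U := by
    simp only [adjugate_apply]
    refine contDiffOn_det fun a b => ?_
    rcases eq_or_ne a j with rfl | h
    · simpa only [updateRow_self] using contDiffOn_const
    · simpa only [updateRow_ne h] using hA a b
  simp only [Matrix.inv_def, Matrix.smul_apply, smul_eq_mul, Ring.inverse_eq_inv']
  exact ((contDiffOn_det hA).inv fun x hx => (hdet x hx).ne_zero).mul hadj

theorem entriesDifferentiableAt_of_contDiffOn {N : WithTop ℕ∞} (hN : N ≠ 0) {U : Set (n → ℝ)}
    (hU : IsOpen U) {A : (n → ℝ) → Matrix n n ℝ}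
    (hA : ∀ i j, ContDiffOn ℝ N (fun x => A x i j) U) {x : n → ℝ} (hx : x ∈ U) :
    EntriesDifferentiableAt A x := fun i j =>
  ((hA i j).contDiffAt (hU.mem_nhds hx)).differentiableAt hN

theorem EntriesDifferentiableAt.mul {A B : (n → ℝ) → Matrix n n ℝ} {x : n → ℝ}
    (hA : EntriesDifferentiableAt A x) (hB : EntriesDifferentiableAt B x) :
    EntriesDifferentiableAt (fun y => A y * B y) x := fun i j => by
  simp only [Matrix.mul_apply]
  exact DifferentiableAt.fun_sum fun l _ => (hA i l).mul (hB l j)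

theorem IsMetricOn.pdMatrix_eq {g : (n → ℝ) → Matrix n n ℝ} {U : Set (n → ℝ)} (hU : IsOpen U)
    (hg : IsMetricOn g U) {x : n → ℝ} (hx : x ∈ U) (k : n) :
    pdMatrix k g x = g x * christoffelMatrix g x k + (christoffelMatrix g x k)ᵀ * g x := by
  refine pdMatrix_eq_christoffelMatrix (hg.nondeg x hx) (hg.symm x hx) (fun k => ?_) k
  rw [← pdMatrix_transpose]
  exact pdMatrix_congr (Filter.eventually_of_mem (hU.mem_nhds hx) hg.symm)

theorem IsMetricOn.christoffel_swap {g : (n → ℝ) → Matrix n n ℝ} {U : Set (n → ℝ)} (hU : IsOpen U)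
    (hg : IsMetricOn g U) {x : n → ℝ} (hx : x ∈ U) (i j k : n) :
    christoffel g x i j k = christoffel g x i k j := by
  have hsymm : ∀ m, pd m (fun y => g y j k) x = pd m (fun y => g y k j) x := fun m =>
    congrArg (fun M => M k j) (pdMatrix_congr (k := m) (A := fun y => (g y)ᵀ)
      (Filter.eventually_of_mem (hU.mem_nhds hx) hg.symm))
  simp only [christoffel, hsymm]
  congr 1
  exact Finset.sum_congr rfl fun m _ => by ring

theorem christoffelMatrix_mul_matrixFunction {U : Set (n → ℝ)} (hU : IsOpen U)
    {g gb L FL : (n → ℝ) → Matrix n n ℝ} (hg : IsMetricOn g U) (hgb : IsMetricOn gb U)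
    (hL : L = Lten g gb) {K : Set ℂ} {f : ℂ → ℂ} (hspec : SpectrumIn L U K)
    (hf0 : ∀ x ∈ U, ∀ z ∈ spectrum ℂ ((L x).map (algebraMap ℝ ℂ)), f z ≠ 0)
    (hFL : RepFunOfL L U K f FL) {x : n → ℝ} (hx : x ∈ U) {φ : n → ℝ}
    (hφ : ∀ k, christoffelMatrix gb x k =
      christoffelMatrix g x k + φ k • (1 : Matrix n n ℝ) + vecMulVec (Pi.single k 1) φ) (k : n) :
    christoffelMatrix (fun y => gb y * FL y) x k = christoffelMatrix (fun y => g y * FL y) x k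
      + φ k • (1 : Matrix n n ℝ) + vecMulVec (Pi.single k 1) φ := by
  obtain ⟨p, hp, hlim⟩ := hFL
  have htop : ((⊤ : ℕ∞) : WithTop ℕ∞) ≠ 0 := by simp
  have hdg := entriesDifferentiableAt_of_contDiffOn htop hU hg.smooth hx
  have hdgb := entriesDifferentiableAt_of_contDiffOn htop hU hgb.smooth hx
  have hdinv := entriesDifferentiableAt_of_contDiffOn htop hU
    (contDiffOn_nonsing_inv hgb.smooth hgb.nondeg) hx
  obtain ⟨hdc, hpdc⟩ := pd_detRatioRoot hdg hdgb (hg.nondeg x hx) (hgb.nondeg x hx)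
  have hdL : EntriesDifferentiableAt L x := fun i j => by
    rw [hL]
    exact hdc.mul (hdinv.mul hdg i j)
  have hgbL : ∀ y ∈ U, gb y * L y = detRatioRoot g gb y • g y := fun y hy => by
    rw [hL, Lten, Matrix.mul_smul, mul_nonsing_inv_cancel_left _ _ (hgb.nondeg y hy)]
    rfl
  obtain ⟨S, hjet, hS⟩ := exists_isMatrixFunctionJet_fderiv hp hdL (hspec x hx)
    (Filter.eventually_of_mem (hU.mem_nhds hx) hlim)
  have hdF : EntriesDifferentiableAt FL x := fun i j => (hS i j).1
  have hpdF : ∀ k, pdMatrix k FL x = S (pdMatrix k L x) := fun k => by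
    ext i j
    exact (hS i j).2 _
  have hpdL : ∀ k, pdMatrix k gb x * L x + gb x * pdMatrix k L x =
      (2 * detRatioRoot g gb x * φ k) • g x + detRatioRoot g gb x • pdMatrix k g x := fun k => by
    rw [← pdMatrix_mul hdgb hdL, pdMatrix_congr (Filter.eventually_of_mem (hU.mem_nhds hx) hgbL),
      pdMatrix_smul hdc hdg,
      hpdc k _ _ φ (hg.pdMatrix_eq hU hx k) (hgb.pdMatrix_eq hU hx k) (hφ k)]
  have hFtend : Tendsto (fun m => aeval (L x) (p m)) atTop (nhds (FL x)) :=
    tendsto_pi_nhds.mpr fun i => tendsto_pi_nhds.mpr fun j => hlim x hx i j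
  have hFdet : IsUnit (FL x).det := (det_ne_zero_of_tendsto_aeval hp
    ((hspec x hx).trans interior_subset) (hf0 x hx) hFtend).isUnit
  let T : n → Matrix n n ℝ := fun k =>
    (FL x)⁻¹ * S (vecMulVec (-(detRatioRoot g gb x • (gb x)⁻¹ *ᵥ φ)) (g x k))
  have hcompat := fun k => hjet.metric_mul_derivatives (T := T k) hFdet (hg.symm x hx)
    (hgb.symm x hx) (hgb.nondeg x hx) (hgbL x hx) (hg.pdMatrix_eq hU hx k)
    (hgb.pdMatrix_eq hU hx k) (hφ k) (hpdL k) (hpdF k) rfl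
  have hgLs : g x * L x = (L x)ᵀ * g x := by
    rw [hL, Lten, transpose_smul, transpose_mul, transpose_nonsing_inv, hg.symm x hx,
      hgb.symm x hx, Matrix.mul_smul, Matrix.smul_mul, mul_assoc]
  have hgbLs : gb x * L x = (L x)ᵀ * gb x := by
    have := congrArg transpose (hgbL x hx)
    rw [transpose_mul, transpose_smul, hg.symm x hx, hgb.symm x hx] at this
    rw [this, hgbL x hx]
  have hTs : ∀ i j k, T k i j = T j i k := fun i j k => by
    simp only [T, Matrix.mul_apply,
      hjet.map_vecMulVec_swap (g x) _ (hg.symm x hx) hgLs _ j k]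
  have key : ∀ h : (n → ℝ) → Matrix n n ℝ, IsMetricOn h U → h x * L x = (L x)ᵀ * h x →
      (∀ k, pdMatrix k h x * FL x + h x * pdMatrix k FL x =
        h x * FL x * (christoffelMatrix h x k + T k)
          + (christoffelMatrix h x k + T k)ᵀ * (h x * FL x)) →
      christoffelMatrix (fun y => h y * FL y) x k = christoffelMatrix h x k + T k := by
    intro h hh hLs hc
    refine christoffelMatrix_eq_of_compat (h := fun y => h y * FL y)
      (T := fun k => christoffelMatrix h x k + T k) ?_ ?_ (fun i j k => ?_) (fun k => ?_) k
    · rw [det_mul]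
      exact (hh.nondeg x hx).mul hFdet
    · rw [transpose_mul, hh.symm x hx, hjet.selfAdjoint _ hLs]
    · simp only [Matrix.add_apply, hTs i j k, christoffelMatrix, of_apply,
        hh.christoffel_swap hU hx i k j]
    · rw [pdMatrix_mul (entriesDifferentiableAt_of_contDiffOn htop hU hh.smooth hx) hdF]
      exact hc k
  rw [key g hg hgLs fun k => (hcompat k).1, key gb hgb hgbLs fun k => (hcompat k).2, hφ]
  abel

end Projective

section Geodesics

/-- Integral curves of a smooth vector field on an open set exist and are smooth. -/
theorem exists_contDiffOn_integralCurve {E : Type*} [NormedAddCommGroup E] [NormedSpace ℝ E]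
    [CompleteSpace E] {W : Set E} (hW : IsOpen W) {V : E → E}
    (hV : ContDiffOn ℝ (⊤ : ℕ∞) V W) {q : E} (hq : q ∈ W) :
    ∃ ε > 0, ∃ c : ℝ → E, c 0 = q ∧ ContDiffOn ℝ (⊤ : ℕ∞) c (Set.Ioo (-ε) ε) ∧
      ∀ t ∈ Set.Ioo (-ε) ε, c t ∈ W ∧ HasDerivAt c (V (c t)) t := by
  have hVq : ContDiffAt ℝ 1 V q := (hV.contDiffAt (hW.mem_nhds hq)).of_le (by simp)
  obtain ⟨c, hc0, ε₀, hε₀, hc⟩ :=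
    hVq.exists_forall_mem_closedBall_exists_eq_forall_mem_Ioo_hasDerivAt₀ (0 : ℝ)
  simp only [zero_sub, zero_add] at hc
  have hcont : ContinuousAt c 0 := (hc 0 ⟨by linarith, hε₀⟩).continuousAt
  obtain ⟨δ, hδ, hδW⟩ := Metric.mem_nhds_iff.mp
    (hcont.preimage_mem_nhds (hW.mem_nhds (by rwa [hc0])))
  let ε := min ε₀ δ
  have hε : 0 < ε := lt_min hε₀ hδ
  have hcW : ∀ t ∈ Set.Ioo (-ε) ε, c t ∈ W ∧ HasDerivAt c (V (c t)) t := by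
    intro t ht
    have h1 : ε ≤ ε₀ := min_le_left _ _
    have h2 : ε ≤ δ := min_le_right _ _
    refine ⟨hδW ?_, hc t ⟨by linarith [ht.1], by linarith [ht.2]⟩⟩
    rw [Metric.mem_ball, dist_zero_right, Real.norm_eq_abs, abs_lt]
    exact ⟨by linarith [ht.1], by linarith [ht.2]⟩
  refine ⟨ε, hε, c, hc0, contDiffOn_infty.mpr fun m => ?_, hcW⟩
  induction m with
  | zero =>
    exact contDiffOn_zero.mpr fun t ht => (hcW t ht).2.continuousAt.continuousWithinAt
  | succ m ih =>
    rw [Nat.cast_succ, contDiffOn_succ_iff_deriv_of_isOpen isOpen_Ioo]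
    refine ⟨fun t ht => (hcW t ht).2.differentiableAt.differentiableWithinAt, by simp, ?_⟩
    refine ((contDiffOn_infty.mp hV m).comp ih fun t ht => (hcW t ht).1).congr fun t ht => ?_
    exact (hcW t ht).2.deriv

variable {n : Type} [Fintype n] [DecidableEq n]

theorem IsMetricOn.contDiffOn_christoffel {g : (n → ℝ) → Matrix n n ℝ} {U : Set (n → ℝ)}
    (hU : IsOpen U) (hg : IsMetricOn g U) (i j k : n) :
    ContDiffOn ℝ (⊤ : ℕ∞) (fun x => christoffel g x i j k) U := by
  have hpd : ∀ l a b, ContDiffOn ℝ (⊤ : ℕ∞) (fun x => pd l (fun y => g y a b) x) U := fun l a b =>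
    ((contDiffOn_infty_iff_fderiv_of_isOpen hU).mp (hg.smooth a b)).2.clm_apply contDiffOn_const
  exact contDiffOn_const.mul (ContDiffOn.sum fun m _ =>
    (contDiffOn_nonsing_inv hg.smooth hg.nondeg i m).mul
      (((hpd j m k).add (hpd k m j)).sub (hpd m j k)))

/-- The geodesic equation in first-order form. -/
def geodesicField (g : (n → ℝ) → Matrix n n ℝ) (q : (n → ℝ) × (n → ℝ)) : (n → ℝ) × (n → ℝ) :=
  (q.2, fun i => -∑ j, ∑ k, christoffel g q.1 i j k * q.2 j * q.2 k)

theorem IsMetricOn.contDiffOn_geodesicField {g : (n → ℝ) → Matrix n n ℝ} {U : Set (n → ℝ)}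
    (hU : IsOpen U) (hg : IsMetricOn g U) :
    ContDiffOn ℝ (⊤ : ℕ∞) (geodesicField g) (U ×ˢ Set.univ) := by
  refine contDiffOn_snd.prodMk (contDiffOn_pi.mpr fun i => (ContDiffOn.sum fun j _ =>
    ContDiffOn.sum fun k _ => ?_).neg)
  have hsnd : ∀ l : n, ContDiffOn ℝ (⊤ : ℕ∞) (fun q : (n → ℝ) × (n → ℝ) => q.2 l)
      (U ×ˢ Set.univ) := fun l => contDiffOn_pi.mp contDiffOn_snd l
  exact (((hg.contDiffOn_christoffel hU i j k).comp contDiffOn_fst fun q hq => hq.1).mul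
    (hsnd j)).mul (hsnd k)

theorem IsMetricOn.exists_pregeodesic {g : (n → ℝ) → Matrix n n ℝ} {U : Set (n → ℝ)}
    (hU : IsOpen U) (hg : IsMetricOn g U) {x : n → ℝ} (hx : x ∈ U) (v : n → ℝ) :
    ∃ γ : ℝ → n → ℝ, ContDiff ℝ (⊤ : ℕ∞) γ ∧ (∀ t, γ t ∈ U) ∧ IsPregeodesic g γ ∧ γ 0 = x ∧
      ∃ a ≠ 0, ∀ i, deriv (fun τ => γ τ i) 0 = a * v i := by
  obtain ⟨ε, hε, c, hc0, hcs, hc⟩ := exists_contDiffOn_integralCurve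
    (hU.prod isOpen_univ) (hg.contDiffOn_geodesicField hU) (q := (x, v)) ⟨hx, trivial⟩
  let s : ℝ → ℝ := fun t => ε / 2 * Real.arctan t
  have hs : ∀ t, s t ∈ Set.Ioo (-ε) ε := fun t => by
    have h1 := Real.neg_pi_div_two_lt_arctan t
    have h2 := Real.arctan_lt_pi_div_two t
    have h3 := Real.pi_lt_four
    constructor <;> simp only [s] <;> nlinarith
  let w : ℝ → ℝ := fun t => ε / 2 * (1 / (1 + t ^ 2))
  have hw : ∀ t, HasDerivAt s (w t) t := fun t => (Real.hasDerivAt_arctan t).const_mul _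
  have hwne : ∀ t, w t ≠ 0 := fun t => by
    simp only [w]
    positivity
  have hwd : Differentiable ℝ w := fun t => by
    have : (1 + t ^ 2 : ℝ) ≠ 0 := by positivity
    simp only [w]
    fun_prop (disch := assumption)
  have hss : ContDiff ℝ (⊤ : ℕ∞) s := contDiff_const.mul Real.contDiff_arctan
  have hγ' : ∀ t i, HasDerivAt (fun τ => (c (s τ)).1 i) ((c (s t)).2 i * w t) t := fun t i =>
    HasDerivAt.comp t (h₂ := fun τ => (c τ).1 i)
      (hasDerivAt_pi.mp (hc _ (hs t)).2.fst i) (hw t)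
  have hγ'' : ∀ t i, HasDerivAt (fun τ => (c (s τ)).2 i * w τ)
      (((geodesicField g (c (s t))).2 i * w t) * w t + (c (s t)).2 i * deriv w t) t := fun t i =>
    HasDerivAt.mul (HasDerivAt.comp t (h₂ := fun τ => (c τ).2 i)
      (hasDerivAt_pi.mp (hc _ (hs t)).2.snd i) (hw t)) (hwd t).hasDerivAt
  refine ⟨fun t => (c (s t)).1, ?_, fun t => (hc _ (hs t)).1.1, ⟨fun t => deriv w t / w t, ?_⟩, ?_,
    w 0, hwne 0, fun i => ?_⟩
  · exact contDiff_fst.comp (contDiffOn_univ.mp (hcs.comp hss.contDiffOn fun t _ => hs t))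
  · intro t i
    have hd : ∀ j, (fun t => deriv (fun τ => (c (s τ)).1 j) t) = fun t => (c (s t)).2 j * w t :=
      fun j => funext fun t => (hγ' t j).deriv
    have hd' : ∀ j, deriv (fun τ => (c (s τ)).1 j) t = (c (s t)).2 j * w t := fun j =>
      (hγ' t j).deriv
    simp only [hd, hd', (hγ'' t i).deriv, geodesicField]
    have hsum : ∑ j, ∑ k, christoffel g (c (s t)).1 i j k * ((c (s t)).2 j * w t)
        * ((c (s t)).2 k * w t) =
        (∑ j, ∑ k, christoffel g (c (s t)).1 i j k * (c (s t)).2 j * (c (s t)).2 k)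
          * w t * w t := by
      simp only [Finset.sum_mul]
      exact Finset.sum_congr rfl fun j _ => Finset.sum_congr rfl fun k _ => by ring
    rw [hsum]
    have := hwne t
    field_simp
    ring
  · simp [s, hc0]
  · rw [(hγ' 0 i).deriv]
    simp [s, hc0, mul_comm]

theorem GeodEquiv.exists_christoffel_sub_eq {g gb : (n → ℝ) → Matrix n n ℝ} {U : Set (n → ℝ)}
    (hU : IsOpen U) (hg : IsMetricOn g U) (hge : GeodEquiv g gb U) {x : n → ℝ} (hx : x ∈ U)
    (v : n → ℝ) :
    ∃ β : ℝ, ∀ i, ∑ j, ∑ k, (christoffel gb x i j k - christoffel g x i j k) * v j * v k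
      = β * v i := by
  obtain ⟨γ, hγ, hγU, hpre, hγ0, a, ha, hav⟩ := hg.exists_pregeodesic hU hx v
  obtain ⟨α', hα'⟩ := (hge γ hγ hγU).mp hpre
  obtain ⟨α, hα⟩ := hpre
  refine ⟨(α' 0 - α 0) / a, fun i => ?_⟩
  have h1 := hα 0 i
  have h2 := hα' 0 i
  simp only [hav, hγ0] at h1 h2
  have hsum : ∀ h : (n → ℝ) → Matrix n n ℝ,
      ∑ j, ∑ k, christoffel h x i j k * (a * v j) * (a * v k) =
        a * a * ∑ j, ∑ k, christoffel h x i j k * v j * v k := fun h => by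
    simp only [Finset.mul_sum]
    exact Finset.sum_congr rfl fun j _ => Finset.sum_congr rfl fun k _ => by ring
  rw [hsum] at h1 h2
  simp only [sub_mul, Finset.sum_sub_distrib]
  have h3 : a * a * (∑ j, ∑ k, christoffel gb x i j k * v j * v k) -
      a * a * (∑ j, ∑ k, christoffel g x i j k * v j * v k) = (α' 0 - α 0) * (a * v i) := by
    linarith
  field_simp
  refine mul_left_cancel₀ ha ?_
  linarith

/-- A symmetric bilinear map sending each vector to a multiple of itself on the diagonal is
of the form `(u, v) ↦ φ(u) v + φ(v) u`. -/
theorem exists_eq_of_diagonal_proportional {D : n → n → n → ℝ} (hsymm : ∀ i j k, D i j k = D i k j)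
    (hD : ∀ v : n → ℝ, ∃ β : ℝ, ∀ i, ∑ j, ∑ k, D i j k * v j * v k = β * v i) :
    ∃ φ : n → ℝ, ∀ i k j, D i k j = (if i = j then φ k else 0) + (if i = k then φ j else 0) := by
  have hdiag : ∀ i k, i ≠ k → D i k k = 0 := by
    intro i k hik
    obtain ⟨β, hβ⟩ := hD (Pi.single k 1)
    simpa [Pi.single_apply, hik] using hβ i
  have hpair : ∀ (e : ℝ) (k l : n), k ≠ l → ∃ β : ℝ, ∀ i,
      D i k k + e * e * D i l l + 2 * e * D i k l =
        β * ((if i = k then 1 else 0) + e * (if i = l then 1 else 0)) := by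
    intro e k l hkl
    obtain ⟨β, hβ⟩ := hD (Pi.single k 1 + e • Pi.single l 1)
    refine ⟨β, fun i => ?_⟩
    have := hβ i
    simp only [Pi.add_apply, Pi.smul_apply, Pi.single_apply, smul_eq_mul, mul_add, add_mul,
      Finset.sum_add_distrib, mul_ite, mul_one, mul_zero, ite_mul, zero_mul,
      Finset.sum_ite_eq', Finset.mem_univ, if_true] at this
    rw [hsymm i l k] at this
    simp only [mul_add, mul_ite, mul_one, mul_zero]
    linarith
  refine ⟨fun k => D k k k / 2, fun i k j => ?_⟩
  by_cases hkj : k = j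
  · subst hkj
    by_cases hik : i = k
    · subst hik
      simp
    · simp [hik, hdiag i k hik]
  · obtain ⟨β, hβ⟩ := hpair 1 k j hkj
    obtain ⟨β', hβ'⟩ := hpair (-1) k j hkj
    have hk := hβ k
    have hj := hβ j
    have hk' := hβ' k
    have hj' := hβ' j
    simp only [hkj, Ne.symm hkj, hdiag k j hkj, hdiag j k (Ne.symm hkj), if_true, if_false]
      at hk hj hk' hj'
    by_cases hik : i = k
    · subst hik
      simp only [hkj, if_true, if_false]
      linarith
    · by_cases hij : i = j
      · subst hij
        simp only [hik, if_true, if_false]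
        linarith
      · have hi := hβ i
        simp only [hik, hij, hdiag i k hik, hdiag i j hij, if_false] at hi ⊢
        linarith

theorem GeodEquiv.exists_christoffelMatrix_eq {g gb : (n → ℝ) → Matrix n n ℝ} {U : Set (n → ℝ)}
    (hU : IsOpen U) (hg : IsMetricOn g U) (hgb : IsMetricOn gb U) (hge : GeodEquiv g gb U)
    {x : n → ℝ} (hx : x ∈ U) :
    ∃ φ : n → ℝ, ∀ k, christoffelMatrix gb x k =
      christoffelMatrix g x k + φ k • (1 : Matrix n n ℝ) + vecMulVec (Pi.single k 1) φ := by
  obtain ⟨φ, hφ⟩ := exists_eq_of_diagonal_proportional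
    (D := fun i j k => christoffel gb x i j k - christoffel g x i j k)
    (fun i j k => by simp only [hg.christoffel_swap hU hx i j k, hgb.christoffel_swap hU hx i j k])
    (hge.exists_christoffel_sub_eq hU hg hx)
  refine ⟨φ, fun k => ?_⟩
  ext i j
  have := hφ i k j
  simp only [christoffelMatrix, of_apply, Matrix.add_apply, Matrix.smul_apply, Matrix.one_apply,
    vecMulVec_apply, Pi.single_apply, smul_eq_mul, mul_ite, mul_one, mul_zero, ite_mul, one_mul,
    zero_mul]
  linarith

theorem IsPregeodesic.of_projective {h hb : (n → ℝ) → Matrix n n ℝ} {γ : ℝ → n → ℝ}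
    (hγ : IsPregeodesic h γ) {φ : ℝ → n → ℝ}
    (hφ : ∀ t k, christoffelMatrix hb (γ t) k = christoffelMatrix h (γ t) k
      + φ t k • (1 : Matrix n n ℝ) + vecMulVec (Pi.single k 1) (φ t)) :
    IsPregeodesic hb γ := by
  obtain ⟨α, hα⟩ := hγ
  refine ⟨fun t => α t + 2 * ∑ k, φ t k * deriv (fun τ => γ τ k) t, fun t i => ?_⟩
  have hent : ∀ j k, christoffel hb (γ t) i j k = christoffel h (γ t) i j k
      + (if i = k then φ t j else 0) + (if i = j then φ t k else 0) := fun j k => by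
    have := congrFun (congrFun (hφ t j) i) k
    simpa [christoffelMatrix, Matrix.one_apply, vecMulVec_apply, Pi.single_apply] using this
  simp only [hent, add_mul, Finset.sum_add_distrib, ite_mul, zero_mul, Finset.sum_ite_eq,
    Finset.mem_univ, if_true, Finset.sum_ite_irrel, Finset.sum_const_zero]
  rw [← add_assoc, ← add_assoc, hα t i, two_mul, add_mul, Finset.sum_mul]
  rw [add_assoc]
  congr 2
  exact Finset.sum_congr rfl fun k _ => by ring

theorem geodEquiv_of_projective {h hb : (n → ℝ) → Matrix n n ℝ} {U : Set (n → ℝ)}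
    (hφ : ∀ x ∈ U, ∃ φ : n → ℝ, ∀ k, christoffelMatrix hb x k = christoffelMatrix h x k
      + φ k • (1 : Matrix n n ℝ) + vecMulVec (Pi.single k 1) φ) :
    GeodEquiv h hb U := by
  intro γ _ hγU
  choose φ hφ using fun t => hφ (γ t) (hγU t)
  refine ⟨fun hγ => hγ.of_projective hφ, fun hγ => hγ.of_projective (φ := fun t => -φ t) ?_⟩
  intro t k
  rw [hφ t k, vecMulVec_neg, Pi.neg_apply, neg_smul]
  abel

end Geodesics

theorem stmt5 {n : ℕ} (U : Set (Fin n → ℝ)) (hU : IsOpen U)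
    (g gb : (Fin n → ℝ) → Matrix (Fin n) (Fin n) ℝ)
    (hg : IsMetricOn g U) (hgb : IsMetricOn gb U)
    (hge : GeodEquiv g gb U)
    (L : (Fin n → ℝ) → Matrix (Fin n) (Fin n) ℝ) (hL : L = Lten g gb)
    (K : Set ℂ) (f : ℂ → ℂ)
    (hadm : AdmissibleFun K f) (hspec : SpectrumIn L U K)
    -- `0 ∉ f(Spectrum L(x))` for every `x ∈ U`
    (hf0 : ∀ x ∈ U, ∀ z ∈ spectrum ℂ ((L x).map (algebraMap ℝ ℂ)), f z ≠ 0)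
    -- `FL = f(L)`
    (FL : (Fin n → ℝ) → Matrix (Fin n) (Fin n) ℝ)
    (hFL : RepFunOfL L U K f FL) :
    -- then `g_f = g·f(L)` and `ḡ_f = ḡ·f(L)` are geodesically equivalent
    GeodEquiv (fun x => g x * FL x) (fun x => gb x * FL x) U := by
  exact geodEquiv_of_projective fun x hx =>
    (hge.exists_christoffelMatrix_eq hU hg hgb hx).imp fun _ hφ =>
      christoffelMatrix_mul_matrixFunction hU hg hgb hL hspec hf0 hFL hx hφ
end
end
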